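/- Let b ∈ ℝ, c < 0, and let m1 > 0 be real. For every integer m ≥ 2 there exist constants C > 0 and δ > 0 such that for all real q with 0 < q < δ, the 2m-th gap length of the operator with potential v(x) = b·q^{m1}·cos 2x + c·q^{2m1}·cos 4x satisfies |γ_{2m}(q) − 8·|Π_{k=1}^{m} ((b/2)² + 8c·(k−1/2)²)|·q^{2m1·m} / (2^{4m}·((2m−1)!)²)| ≤ C·q^{2m1·(m+1)}. -/

import Mathlib

open Real

noncomputable section

/-- `f` is a (possibly zero) solution of `-f'' + v f = λ f` that is `π`-periodic. -/
def IsPerEF (v : ℝ → ℝ) (lam : ℝ) (f : ℝ → ℝ) : Prop :=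
  ContDiff ℝ 2 f ∧ (∀ x, -(deriv (deriv f) x) + v x * f x = lam * f x) ∧
    ∀ x, f (x + Real.pi) = f x

/-- `f` is a (possibly zero) solution of `-f'' + v f = λ f` with `f(x+π) = -f(x)`. -/
def IsSemiEF (v : ℝ → ℝ) (lam : ℝ) (f : ℝ → ℝ) : Prop :=
  ContDiff ℝ 2 f ∧ (∀ x, -(deriv (deriv f) x) + v x * f x = lam * f x) ∧
    ∀ x, f (x + Real.pi) = -f x

/-- Multiplicity of `λ` as a periodic eigenvalue: the dimension of the space of
π-periodic solutions. -/
def perMult (v : ℝ → ℝ) (lam : ℝ) : ℕ :=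
  Module.finrank ℝ (Submodule.span ℝ {f : ℝ → ℝ | IsPerEF v lam f})

/-- Multiplicity of `λ` as a semi-periodic eigenvalue. -/
def semiMult (v : ℝ → ℝ) (lam : ℝ) : ℕ :=
  Module.finrank ℝ (Submodule.span ℝ {f : ℝ → ℝ | IsSemiEF v lam f})

/-- `lamP` enumerates the periodic eigenvalues of `-D² + v` in nondecreasing order
with multiplicity (indices `0, 1, 2, …`). -/
def EnumPer (v : ℝ → ℝ) (lamP : ℕ → ℝ) : Prop :=
  Monotone lamP ∧ (∀ n, ∃ f, f ≠ 0 ∧ IsPerEF v (lamP n) f) ∧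
    ∀ lam : ℝ, Nat.card {n : ℕ // lamP n = lam} = perMult v lam

/-- `lamM` enumerates the semi-periodic eigenvalues of `-D² + v` in nondecreasing order
with multiplicity (indices `1, 2, 3, …`). -/
def EnumSemi (v : ℝ → ℝ) (lamM : ℕ → ℝ) : Prop :=
  MonotoneOn lamM {n : ℕ | 1 ≤ n} ∧ (∀ n, 1 ≤ n → ∃ f, f ≠ 0 ∧ IsSemiEF v (lamM n) f) ∧
    ∀ lam : ℝ, Nat.card {n : ℕ // 1 ≤ n ∧ lamM n = lam} = semiMult v lam

/-- The length of the `n`-th instability interval: `λ_{n+1}^- - λ_n^-` for odd `n`,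
`λ_n^+ - λ_{n-1}^+` for even `n`. -/
def gapLen (lamP lamM : ℕ → ℝ) (n : ℕ) : ℝ :=
  if Odd n then lamM (n + 1) - lamM n else lamP n - lamP (n - 1)

/-!
Write `c = -2 β ^ 2` and `s = q ^ m1`. Multiplying an eigenfunction by `exp (± β s cos 2x)` turns
the equation into a three-term recurrence for its Fourier coefficients, with coupling `s α_k` where
`α_k = b / 2 + 4 β (k - 1 / 2)`. For small `s` a contraction argument yields exactly one even
solution of the recurrence, and for `j ≥ 1` one odd solution, with eigenvalue within `1` of
`4 j ^ 2`; so the `2m`-th gap is `|μ - ν|` for the even and odd eigenvalues near `4 m ^ 2`.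

Taking the opposite sign of `β` for the odd functions transposes the recurrence
(`α'_k = α_{1 - k}`), so pairing the even coefficients `c` with the odd ones `d` telescopes to
`(μ - ν) ∑_{n ≥ 1} c_n d_n = s α_1 c_0 d_1`. The sum is `1 + O(s ^ 2)`, and following the recurrence
from the mode `m` down gives the leading terms of `c_0 = O(s ^ m)` and `d_1 = O(s ^ (m - 1))`,
each a product of the `α_k` over explicit denominators.
-/

/-- The off-diagonal part, at the index `k`, of the three-term recurrence with coefficients `α`;
reflection of the index exchanges the two neighbours. -/
def neighbourSum (α c : ℤ → ℝ) (k : ℤ) : ℝ :=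
  α k * c (k - 1) + α (-k) * c (k + 1)

/-- The three-term recurrence for the Fourier coefficients of a solution of Hill's equation after
the exponential factor has been split off; `s` is the coupling and `μ` the shifted eigenvalue. -/
def SolvesRecurrence (α : ℤ → ℝ) (s μ : ℝ) (c : ℤ → ℝ) : Prop :=
  ∀ k : ℤ, (μ - 4 * (k : ℝ) ^ 2) * c k = s * neighbourSum α c k

/-- Linear growth of the coefficients of the recurrence, with the explicit constant `A` that
controls how small the coupling has to be. -/
structure HasLinearGrowth (α : ℤ → ℝ) (A : ℝ) : Prop where
  pos : 0 < A
  abs_le : ∀ k : ℤ, |α k| ≤ A * (1 + |(k : ℝ)|)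

/-- A solution of the recurrence with symmetry `c (-k) = σ * c k` and `μ` near the unperturbed
eigenvalue `4 * j ^ 2`, normalized to be `1` at `j` and to take values in `[-1, 1]`. -/
structure IsModeSolution (α : ℤ → ℝ) (σ s : ℝ) (j : ℕ) (μ : ℝ) (c : ℤ → ℝ) : Prop where
  near : |μ - 4 * (j : ℝ) ^ 2| ≤ 1
  recurrence : SolvesRecurrence α s μ c
  center : c j = 1
  symm : ∀ k, c (-k) = σ * c k
  abs_le_one : ∀ k, |c k| ≤ 1

lemma natCast_natAbs_eq_abs (k : ℤ) : (k.natAbs : ℝ) = |(k : ℝ)| := by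
  rw [Nat.cast_natAbs, Int.cast_abs]

lemma neighbourSum_sub (α c d : ℤ → ℝ) (k : ℤ) :
    neighbourSum α (fun l ↦ c l - d l) k = neighbourSum α c k - neighbourSum α d k := by
  unfold neighbourSum; ring

lemma neighbourSum_neg {α c : ℤ → ℝ} {σ : ℝ} (hsym : ∀ k, c (-k) = σ * c k) (k : ℤ) :
    neighbourSum α c (-k) = σ * neighbourSum α c k := by
  unfold neighbourSum
  rw [show -k - 1 = -(k + 1) by ring, show -k + 1 = -(k - 1) by ring, hsym, hsym, neg_neg]
  ring

section Denominators

variable {j : ℕ} {k : ℤ} {μ : ℝ}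

lemma one_le_abs_abs_sub (hk : k.natAbs ≠ j) : 1 ≤ |(|(k : ℝ)| - j)| := by
  have : (1 : ℤ) ≤ |(k.natAbs : ℤ) - j| := Int.one_le_abs (by omega)
  rw [← natCast_natAbs_eq_abs]
  exact_mod_cast this

lemma one_le_abs_add (hk : k.natAbs ≠ j) : 1 ≤ |(k : ℝ)| + j := by
  rw [← natCast_natAbs_eq_abs]
  exact_mod_cast (by omega : 1 ≤ k.natAbs + j)

lemma three_mul_le_abs_sub_four_mul_sq (hk : k.natAbs ≠ j) (hμ : |μ - 4 * (j : ℝ) ^ 2| ≤ 1) :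
    3 * (|(|(k : ℝ)| - j)| * (|(k : ℝ)| + j)) ≤ |μ - 4 * (k : ℝ) ^ 2| := by
  have hfactor : |4 * (k : ℝ) ^ 2 - 4 * (j : ℝ) ^ 2| =
      4 * (|(|(k : ℝ)| - j)| * (|(k : ℝ)| + j)) := by
    rw [← sq_abs (k : ℝ), show 4 * |(k : ℝ)| ^ 2 - 4 * (j : ℝ) ^ 2 =
      4 * ((|(k : ℝ)| - j) * (|(k : ℝ)| + j)) by ring, abs_mul, abs_mul, abs_of_pos four_pos,
      abs_of_nonneg (by positivity : 0 ≤ |(k : ℝ)| + j)]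
  have htriangle := abs_sub_le (4 * (k : ℝ) ^ 2) μ (4 * (j : ℝ) ^ 2)
  rw [abs_sub_comm _ μ] at htriangle
  linarith [one_le_mul_of_one_le_of_one_le (one_le_abs_abs_sub hk) (one_le_abs_add hk)]

lemma one_add_abs_le_abs_sub (hk : k.natAbs ≠ j) (hμ : |μ - 4 * (j : ℝ) ^ 2| ≤ 1) :
    1 + |(k : ℝ)| ≤ |μ - 4 * (k : ℝ) ^ 2| := by
  have hprod := three_mul_le_abs_sub_four_mul_sq hk hμ
  have hsum := one_le_abs_add hk
  have := le_mul_of_one_le_left (zero_le_one.trans hsum) (one_le_abs_abs_sub hk)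
  linarith [(j.cast_nonneg : (0 : ℝ) ≤ j)]

lemma sub_four_mul_sq_ne_zero (hk : k.natAbs ≠ j) (hμ : |μ - 4 * (j : ℝ) ^ 2| ≤ 1) :
    μ - 4 * (k : ℝ) ^ 2 ≠ 0 :=
  abs_pos.1 (by linarith [one_add_abs_le_abs_sub hk hμ, abs_nonneg (k : ℝ)])

lemma one_add_abs_sq_le_mul_abs_sub (hk : k.natAbs ≠ j) (hμ : |μ - 4 * (j : ℝ) ^ 2| ≤ 1) :
    (1 + |(k : ℝ)|) ^ 2 ≤ (2 + j) * |μ - 4 * (k : ℝ) ^ 2| := by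
  have hprod := three_mul_le_abs_sub_four_mul_sq hk hμ
  have hdist := one_le_abs_abs_sub hk
  have hsum := one_le_abs_add hk
  have : (0 : ℝ) ≤ j := j.cast_nonneg
  have hleft : 1 + |(k : ℝ)| ≤ (2 + j) * |(|(k : ℝ)| - j)| := by
    nlinarith [le_abs_self (|(k : ℝ)| - j)]
  calc (1 + |(k : ℝ)|) ^ 2 = (1 + |(k : ℝ)|) * (1 + |(k : ℝ)|) := sq _
    _ ≤ ((2 + j) * |(|(k : ℝ)| - j)|) * (2 * (|(k : ℝ)| + j)) :=
        mul_le_mul hleft (by linarith) (by positivity) (by positivity)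
    _ = (2 + j) * (2 * (|(|(k : ℝ)| - j)| * (|(k : ℝ)| + j))) := by ring
    _ ≤ (2 + j) * |μ - 4 * (k : ℝ) ^ 2| := by
        have : 0 ≤ |(|(k : ℝ)| - j)| * (|(k : ℝ)| + j) := by positivity
        exact mul_le_mul_of_nonneg_left (by linarith) (by positivity)

lemma one_add_abs_le_of_forall_window {m : ℕ} (hμm : μ ≤ 4 * (m : ℝ) ^ 2 + 1)
    (hμ : ∀ j : ℕ, j ≤ m → 1 < |μ - 4 * (j : ℝ) ^ 2|) :
    1 + |(k : ℝ)| ≤ (1 + m) * |μ - 4 * (k : ℝ) ^ 2| := by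
  have hk := natCast_natAbs_eq_abs k
  rw [← sq_abs (k : ℝ), ← hk]
  have : (0 : ℝ) ≤ m := m.cast_nonneg
  by_cases hkm : k.natAbs ≤ m
  · have : (k.natAbs : ℝ) ≤ m := by exact_mod_cast hkm
    nlinarith [hμ _ hkm]
  · have : (m : ℝ) + 1 ≤ k.natAbs := by exact_mod_cast not_le.1 hkm
    have : 1 + (k.natAbs : ℝ) ≤ |μ - 4 * (k.natAbs : ℝ) ^ 2| := by
      nlinarith [neg_le_abs (μ - 4 * (k.natAbs : ℝ) ^ 2)]
    nlinarith

end Denominators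

lemma abs_le_of_forall_bound_improves {ι : Type*} {u : ι → ℝ} {a : ℝ} (ha : 0 ≤ a)
    (hu : ∃ B, ∀ k, |u k| ≤ B)
    (himproves : ∀ B, (∀ k, |u k| ≤ B) → ∀ k, |u k| ≤ max a (B / 4)) (k : ι) : |u k| ≤ a := by
  obtain ⟨B, hB⟩ := hu
  have : Nonempty ι := ⟨k⟩
  have hle : ∀ l, |u l| ≤ ⨆ l, |u l| := le_ciSup ⟨B, Set.forall_mem_range.2 hB⟩
  rcases le_max_iff.1 (ciSup_le (himproves _ hle)) with h | h
  · exact (hle k).trans h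
  · linarith [hle k]

section Recurrence

variable {α : ℤ → ℝ} {A s μ σ : ℝ} {j : ℕ} {c : ℤ → ℝ}

lemma HasLinearGrowth.abs_neighbourSum_le (hα : HasLinearGrowth α A) {k : ℤ} {B : ℝ}
    (hpred : |c (k - 1)| ≤ B) (hsucc : |c (k + 1)| ≤ B) :
    |neighbourSum α c k| ≤ 2 * A * (1 + |(k : ℝ)|) * B := by
  have hA := hα.pos
  have hneg : |α (-k)| ≤ A * (1 + |(k : ℝ)|) := by simpa using hα.abs_le (-k)
  calc |neighbourSum α c k| ≤ |α k * c (k - 1)| + |α (-k) * c (k + 1)| := abs_add_le _ _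
    _ ≤ A * (1 + |(k : ℝ)|) * B + A * (1 + |(k : ℝ)|) * B := by
        rw [abs_mul, abs_mul]
        exact add_le_add
          (mul_le_mul (hα.abs_le k) hpred (abs_nonneg _) (by positivity))
          (mul_le_mul hneg hsucc (abs_nonneg _) (by positivity))
    _ = 2 * A * (1 + |(k : ℝ)|) * B := by ring

lemma HasLinearGrowth.two_mul_le_of_small (hα : HasLinearGrowth α A) (hs : 0 ≤ s)
    (hsmall : 8 * A * s * (1 + j) ≤ 1) : 2 * A * s ≤ 1 / 4 := by
  have := hα.pos
  have : 0 ≤ A * s * j := by positivity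
  linarith

lemma HasLinearGrowth.small_of_le (hα : HasLinearGrowth α A) (hs : 0 ≤ s) {m : ℕ} (hjm : j ≤ m)
    (hsmall : 8 * A * s * (1 + m) ≤ 1) : 8 * A * s * (1 + j) ≤ 1 := by
  have := hα.pos
  refine le_trans ?_ hsmall
  gcongr

lemma SolvesRecurrence.mul_abs_le (hα : HasLinearGrowth α A) (hs : 0 ≤ s)
    (hc : SolvesRecurrence α s μ c) {k : ℤ} {w K B : ℝ} (hK : 0 ≤ K)
    (hw : (1 + |(k : ℝ)|) * w ≤ K * |μ - 4 * (k : ℝ) ^ 2|)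
    (hpred : |c (k - 1)| ≤ B) (hsucc : |c (k + 1)| ≤ B) :
    w * |c k| ≤ K * (2 * A * s * B) := by
  have hN := hα.abs_neighbourSum_le hpred hsucc
  refine le_of_mul_le_mul_left ?_ (by positivity : 0 < 1 + |(k : ℝ)|)
  calc (1 + |(k : ℝ)|) * (w * |c k|) = (1 + |(k : ℝ)|) * w * |c k| := by ring
    _ ≤ K * |μ - 4 * (k : ℝ) ^ 2| * |c k| := mul_le_mul_of_nonneg_right hw (abs_nonneg _)
    _ = K * (s * |neighbourSum α c k|) := by
        rw [mul_assoc, ← abs_mul, hc k, abs_mul, abs_of_nonneg hs]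
    _ ≤ K * (s * (2 * A * (1 + |(k : ℝ)|) * B)) := by gcongr
    _ = (1 + |(k : ℝ)|) * (K * (2 * A * s * B)) := by ring

lemma SolvesRecurrence.abs_le_abs_center (hα : HasLinearGrowth α A) (hs : 0 ≤ s)
    (hsmall : 8 * A * s * (1 + j) ≤ 1) (hμ : |μ - 4 * (j : ℝ) ^ 2| ≤ 1)
    (hc : SolvesRecurrence α s μ c) (hσ : |σ| = 1) (hsym : ∀ k, c (-k) = σ * c k)
    (hb : ∃ B, ∀ k, |c k| ≤ B) (k : ℤ) : |c k| ≤ |c j| := by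
  refine abs_le_of_forall_bound_improves (abs_nonneg _) hb (fun B hB k ↦ ?_) k
  by_cases hk : k.natAbs = j
  · refine le_max_of_le_left (le_of_eq ?_)
    rcases Int.natAbs_eq_iff.1 hk with rfl | rfl
    · rfl
    · rw [hsym, abs_mul, hσ, one_mul]
  · refine le_max_of_le_right ?_
    have hstep := hc.mul_abs_le hα hs (w := 1) zero_le_one
      (by linarith [one_add_abs_le_abs_sub hk hμ]) (hB _) (hB _)
    have hsmall' := mul_le_mul_of_nonneg_right (hα.two_mul_le_of_small hs hsmall)
      ((abs_nonneg _).trans (hB k))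
    linarith

lemma SolvesRecurrence.eq_zero_off_windows (hα : HasLinearGrowth α A) (hs : 0 ≤ s) {m : ℕ}
    (hsmall : 8 * A * s * (1 + m) ≤ 1) (hμm : μ ≤ 4 * (m : ℝ) ^ 2 + 1)
    (hμ : ∀ j : ℕ, j ≤ m → 1 < |μ - 4 * (j : ℝ) ^ 2|) (hc : SolvesRecurrence α s μ c)
    (hb : ∃ B, ∀ k, |c k| ≤ B) (k : ℤ) : c k = 0 := by
  refine abs_nonpos_iff.1 (abs_le_of_forall_bound_improves le_rfl hb (fun B hB k ↦ ?_) k)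
  refine le_max_of_le_right ?_
  have hstep := hc.mul_abs_le hα hs (w := 1) (by positivity : (0 : ℝ) ≤ 1 + m)
    (by linarith [one_add_abs_le_of_forall_window (k := k) hμm hμ]) (hB _) (hB _)
  have hsmall' := mul_le_mul_of_nonneg_right hsmall ((abs_nonneg _).trans (hB k))
  linarith

lemma SolvesRecurrence.abs_le_div (hα : HasLinearGrowth α A) (hs : 0 ≤ s)
    (hμ : |μ - 4 * (j : ℝ) ^ 2| ≤ 1) (hc : SolvesRecurrence α s μ c) {k : ℤ}
    (hk : k.natAbs ≠ j) {B : ℝ} (hpred : |c (k - 1)| ≤ B) (hsucc : |c (k + 1)| ≤ B) :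
    |c k| ≤ 2 * A * (2 + j) * s * B / (1 + |(k : ℝ)|) := by
  rw [le_div_iff₀' (by positivity)]
  refine (hc.mul_abs_le hα hs (by positivity : (0 : ℝ) ≤ 2 + j) ?_ hpred hsucc).trans_eq (by ring)
  rw [← sq]
  exact one_add_abs_sq_le_mul_abs_sub hk hμ

end Recurrence

section Decay

/-- Polynomial decay of order `p` of a two-sided sequence. -/
def HasDecay (p : ℕ) (c : ℤ → ℝ) : Prop :=
  ∃ C, 0 ≤ C ∧ ∀ k : ℤ, |c k| ≤ C / (1 + |(k : ℝ)|) ^ p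

lemma HasDecay.exists_abs_le_div_of_neighbour {p : ℕ} {c : ℤ → ℝ} (hc : HasDecay p c) :
    ∃ C, 0 ≤ C ∧ ∀ k l : ℤ, |(k : ℝ)| ≤ |(l : ℝ)| + 1 → |c l| ≤ C / (1 + |(k : ℝ)|) ^ p := by
  obtain ⟨C, hC, hb⟩ := hc
  refine ⟨C * 2 ^ p, by positivity, fun k l hkl ↦ (hb l).trans ?_⟩
  rw [div_le_div_iff₀ (by positivity) (by positivity), mul_assoc, ← mul_pow]
  gcongr
  linarith [abs_nonneg (l : ℝ)]

lemma SolvesRecurrence.hasDecay_succ {α : ℤ → ℝ} {A s μ : ℝ} {j p : ℕ} {c : ℤ → ℝ}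
    (hα : HasLinearGrowth α A) (hs : 0 ≤ s) (hμ : |μ - 4 * (j : ℝ) ^ 2| ≤ 1)
    (hc : SolvesRecurrence α s μ c) (hdecay : HasDecay p c) : HasDecay (p + 1) c := by
  obtain ⟨C, hC, hneighbour⟩ := hdecay.exists_abs_le_div_of_neighbour
  have hA := hα.pos
  refine ⟨(1 + j + 2 * A * (2 + j) * s) * C, by positivity, fun k ↦ ?_⟩
  rw [pow_succ, ← div_div]
  by_cases hk : k.natAbs = j
  · have hkj : (j : ℝ) = |(k : ℝ)| := by rw [← hk, natCast_natAbs_eq_abs]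
    calc |c k| ≤ C / (1 + |(k : ℝ)|) ^ p := hneighbour k k (by linarith)
      _ = (1 + j) * C / (1 + |(k : ℝ)|) ^ p / (1 + |(k : ℝ)|) := by
          rw [hkj]
          field_simp
      _ ≤ (1 + j + 2 * A * (2 + j) * s) * C / (1 + |(k : ℝ)|) ^ p / (1 + |(k : ℝ)|) := by
          gcongr ?_ * C / _ / _
          exact le_add_of_nonneg_right (by positivity)
  · have hpred : |(k : ℝ)| ≤ |((k - 1 : ℤ) : ℝ)| + 1 := by
      simpa using abs_add_le ((k : ℝ) - 1) 1
    have hsucc : |(k : ℝ)| ≤ |((k + 1 : ℤ) : ℝ)| + 1 := by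
      simpa using abs_sub ((k : ℝ) + 1) 1
    refine (hc.abs_le_div hα hs hμ hk (hneighbour k _ hpred) (hneighbour k _ hsucc)).trans ?_
    rw [mul_div_assoc']
    gcongr
    exact le_add_of_nonneg_left (by positivity)

lemma IsModeSolution.hasDecay {α : ℤ → ℝ} {A σ s μ : ℝ} {j : ℕ} {c : ℤ → ℝ}
    (hα : HasLinearGrowth α A) (hs : 0 ≤ s) (hc : IsModeSolution α σ s j μ c) (p : ℕ) :
    HasDecay p c := by
  induction p with
  | zero => exact ⟨1, zero_le_one, by simpa using hc.abs_le_one⟩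
  | succ p ih => exact hc.recurrence.hasDecay_succ hα hs hc.near ih

end Decay

lemma existsUnique_fixedPoint_of_halving {ι : Type*} {S : Set (ι → ℝ)}
    (hclosed : IsClosed S) (hne : S.Nonempty) (hbound : ∀ c ∈ S, ∀ k, |c k| ≤ 1)
    {T : (ι → ℝ) → ι → ℝ} (hmaps : Set.MapsTo T S S)
    (hhalving : ∀ c ∈ S, ∀ d ∈ S, ∀ B, (∀ k, |c k - d k| ≤ B) → ∀ k, |T c k - T d k| ≤ B / 2) :
    ∃! c, c ∈ S ∧ T c = c := by
  let _ : TopologicalSpace ι := ⊥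
  have : DiscreteTopology ι := ⟨rfl⟩
  let X : Set (BoundedContinuousFunction ι ℝ) := {f | (f : ι → ℝ) ∈ S}
  let ofMem (c : ι → ℝ) (hc : c ∈ S) : X :=
    ⟨.ofNormedAddCommGroupDiscrete c 1 (hbound c hc), hc⟩
  have hX : IsClosed X := hclosed.preimage BoundedContinuousFunction.continuous_coe
  have : CompleteSpace X := hX.completeSpace_coe
  have : Nonempty X := hne.elim fun c hc ↦ ⟨ofMem c hc⟩
  let F (f : X) : X := ofMem (T f.1) (hmaps f.2)
  have hF : ContractingWith (1 / 2) F := by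
    refine ⟨by norm_num, LipschitzWith.of_dist_le_mul fun f g ↦ ?_⟩
    refine (BoundedContinuousFunction.dist_le (by positivity)).2 fun k ↦ ?_
    have := hhalving _ f.2 _ g.2 (dist f g) fun l ↦
      BoundedContinuousFunction.dist_coe_le_dist (f := f.1) (g := g.1) l
    refine (this k).trans_eq ?_
    push_cast
    ring
  refine ⟨hF.fixedPoint.1, ⟨hF.fixedPoint.2, ?_⟩, fun c hc ↦ ?_⟩
  · exact congrArg (fun f : X ↦ (f.1 : ι → ℝ)) hF.fixedPoint_isFixedPt
  · have : Function.IsFixedPt F (ofMem c hc.1) := Subtype.ext (DFunLike.coe_injective hc.2)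
    exact congrArg (fun f : X ↦ (f.1 : ι → ℝ)) (hF.fixedPoint_unique this)

section FixedPoint

/-- The value of `μ` forced by the recurrence at `j` on a sequence with `c j = 1`. -/
def modeEigenvalue (α : ℤ → ℝ) (s : ℝ) (j : ℕ) (c : ℤ → ℝ) : ℝ :=
  4 * (j : ℝ) ^ 2 + s * neighbourSum α c j

/-- The map whose fixed points are the normalized solutions of the recurrence with symmetry `σ`:
the recurrence is solved for `c k` away from `±j`. -/
def modeMap (α : ℤ → ℝ) (σ s : ℝ) (j : ℕ) (c : ℤ → ℝ) (k : ℤ) : ℝ :=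
  if k = j then 1 else if k = -j then σ else
    s * neighbourSum α c k / (modeEigenvalue α s j c - 4 * (k : ℝ) ^ 2)

/-- The sequences among which the normalized solutions are sought. -/
def symmetricUnitSequences (σ : ℝ) : Set (ℤ → ℝ) :=
  {c | (∀ k, c (-k) = σ * c k) ∧ ∀ k, |c k| ≤ 1}

variable {α : ℤ → ℝ} {A s μ σ : ℝ} {j : ℕ} {c d : ℤ → ℝ}

lemma modeMap_of_natAbs_ne {k : ℤ} (hk : k.natAbs ≠ j) : modeMap α σ s j c k =
    s * neighbourSum α c k / (modeEigenvalue α s j c - 4 * (k : ℝ) ^ 2) := by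
  rw [modeMap, if_neg (by omega), if_neg (by omega)]

lemma abs_modeEigenvalue_sub_le_one (hα : HasLinearGrowth α A) (hs : 0 ≤ s)
    (hsmall : 8 * A * s * (1 + j) ≤ 1) (hc : ∀ k, |c k| ≤ 1) :
    |modeEigenvalue α s j c - 4 * (j : ℝ) ^ 2| ≤ 1 := by
  have hN := hα.abs_neighbourSum_le (k := j) (hc _) (hc _)
  rw [Int.cast_natCast, Nat.abs_cast] at hN
  rw [modeEigenvalue, add_sub_cancel_left, abs_mul, abs_of_nonneg hs]
  have := hα.pos
  have : 0 ≤ A * s * (1 + j) := by positivity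
  linarith [mul_le_mul_of_nonneg_left hN hs]

lemma abs_modeMap_le_one (hα : HasLinearGrowth α A) (hs : 0 ≤ s)
    (hsmall : 8 * A * s * (1 + j) ≤ 1) (hσ : |σ| = 1) (hc : ∀ k, |c k| ≤ 1) (k : ℤ) :
    |modeMap α σ s j c k| ≤ 1 := by
  by_cases hk : k.natAbs = j
  · unfold modeMap
    split_ifs with hpos hneg
    · exact abs_one.le
    · exact hσ.le
    · omega
  have hden := one_add_abs_le_abs_sub hk (abs_modeEigenvalue_sub_le_one hα hs hsmall hc)
  rw [modeMap_of_natAbs_ne hk, abs_div, abs_mul, abs_of_nonneg hs]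
  refine div_le_one_of_le₀ (le_trans ?_ hden) (abs_nonneg _)
  have hN := mul_le_mul_of_nonneg_left (hα.abs_neighbourSum_le (hc (k - 1)) (hc (k + 1))) hs
  have := mul_le_mul_of_nonneg_right (hα.two_mul_le_of_small hs hsmall)
    (by positivity : 0 ≤ 1 + |(k : ℝ)|)
  linarith [abs_nonneg (k : ℝ)]

lemma modeMap_neg (hσ : |σ| = 1) (hjσ : j = 0 → σ = 1) (hc : ∀ k, c (-k) = σ * c k) (k : ℤ) :
    modeMap α σ s j c (-k) = σ * modeMap α σ s j c k := by
  by_cases hk : k.natAbs = j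
  · have hσσ : σ * σ = 1 := by rw [← abs_mul_abs_self, hσ, one_mul]
    unfold modeMap
    rcases Int.natAbs_eq_iff.1 hk with rfl | rfl
    · rcases Nat.eq_zero_or_pos j with rfl | hj
      · simp [hjσ rfl]
      · rw [if_neg (by omega), if_pos rfl, if_pos rfl, mul_one]
    · rcases Nat.eq_zero_or_pos j with rfl | hj
      · simp [hjσ rfl]
      · rw [if_pos (neg_neg _), if_neg (by omega), if_pos rfl, hσσ]
  · rw [modeMap_of_natAbs_ne hk, modeMap_of_natAbs_ne (by rwa [Int.natAbs_neg]),
      neighbourSum_neg hc, Int.cast_neg, neg_sq]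
    ring

lemma abs_div_sub_div_le {x y D E w B : ℝ} (hw : 1 ≤ w) (hD : w ≤ |D|) (hE : w ≤ |E|)
    (hxy : |x - y| ≤ w * (B / 4)) (hy : |y| ≤ w) (hDE : |E - D| ≤ B / 4) :
    |x / D - y / E| ≤ B / 2 := by
  have hB : 0 ≤ B / 4 := (abs_nonneg _).trans hDE
  have hDpos : 0 < |D| := by linarith
  have hEpos : 0 < |E| := by linarith
  have hsplit : x / D - y / E = (x - y) / D + y / E * ((E - D) / D) := by
    have := abs_pos.1 hDpos
    have := abs_pos.1 hEpos
    field_simp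
    ring
  have hnum : |(x - y) / D| ≤ B / 4 := by
    rw [abs_div, div_le_iff₀ hDpos, mul_comm]
    exact hxy.trans (mul_le_mul_of_nonneg_right hD hB)
  have hden : |y / E * ((E - D) / D)| ≤ 1 * (B / 4) := by
    rw [abs_mul, abs_div, abs_div]
    refine mul_le_mul ?_ ?_ (by positivity) zero_le_one
    · exact div_le_one_of_le₀ (hy.trans hE) hEpos.le
    · exact (div_le_self (abs_nonneg _) (hw.trans hD)).trans hDE
  rw [hsplit]
  linarith [abs_add_le ((x - y) / D) (y / E * ((E - D) / D))]

lemma abs_modeMap_sub_le (hα : HasLinearGrowth α A) (hs : 0 ≤ s)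
    (hsmall : 8 * A * s * (1 + j) ≤ 1) (hc : ∀ k, |c k| ≤ 1) (hd : ∀ k, |d k| ≤ 1) {B : ℝ}
    (hB : ∀ k, |c k - d k| ≤ B) (k : ℤ) :
    |modeMap α σ s j c k - modeMap α σ s j d k| ≤ B / 2 := by
  have hB0 : 0 ≤ B := (abs_nonneg _).trans (hB 0)
  by_cases hk : k.natAbs = j
  · unfold modeMap
    split_ifs
    · rw [sub_self, abs_zero]
      positivity
    · rw [sub_self, abs_zero]
      positivity
    · omega
  have hquarter := hα.two_mul_le_of_small hs hsmall
  have hdiff (l : ℤ) : |s * neighbourSum α c l - s * neighbourSum α d l| ≤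
      2 * A * s * ((1 + |(l : ℝ)|) * B) := by
    rw [← mul_sub, ← neighbourSum_sub, abs_mul, abs_of_nonneg hs]
    linarith [mul_le_mul_of_nonneg_left
      (hα.abs_neighbourSum_le (c := fun l ↦ c l - d l) (hB (l - 1)) (hB (l + 1))) hs]
  rw [modeMap_of_natAbs_ne hk, modeMap_of_natAbs_ne hk]
  refine abs_div_sub_div_le (w := 1 + |(k : ℝ)|) (by linarith [abs_nonneg (k : ℝ)])
    (one_add_abs_le_abs_sub hk (abs_modeEigenvalue_sub_le_one hα hs hsmall hc))
    (one_add_abs_le_abs_sub hk (abs_modeEigenvalue_sub_le_one hα hs hsmall hd)) ?_ ?_ ?_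
  · linarith [hdiff k, mul_le_mul_of_nonneg_right hquarter
      (by positivity : 0 ≤ (1 + |(k : ℝ)|) * B)]
  · rw [abs_mul, abs_of_nonneg hs]
    have := mul_le_mul_of_nonneg_right hquarter (by positivity : 0 ≤ 1 + |(k : ℝ)|)
    linarith [abs_nonneg (k : ℝ), mul_le_mul_of_nonneg_left
      (hα.abs_neighbourSum_le (hd (k - 1)) (hd (k + 1))) hs]
  · have hj := hdiff j
    rw [Int.cast_natCast, Nat.abs_cast] at hj
    rw [sub_sub_sub_cancel_right, abs_sub_comm, modeEigenvalue, modeEigenvalue,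
      add_sub_add_left_eq_sub]
    linarith [mul_le_mul_of_nonneg_right hsmall hB0]

lemma isClosed_symmetricUnitSequences (σ : ℝ) : IsClosed (symmetricUnitSequences σ) := by
  simp only [symmetricUnitSequences, Set.ofPred_and, Set.ofPred_forall]
  exact (isClosed_iInter fun k ↦ isClosed_eq (by fun_prop) (by fun_prop)).inter
    (isClosed_iInter fun k ↦ isClosed_le (by fun_prop) continuous_const)

theorem existsUnique_modeMap_eq (hα : HasLinearGrowth α A) (hs : 0 ≤ s)
    (hsmall : 8 * A * s * (1 + j) ≤ 1) (hσ : |σ| = 1) (hjσ : j = 0 → σ = 1) :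
    ∃! c, c ∈ symmetricUnitSequences σ ∧ modeMap α σ s j c = c :=
  existsUnique_fixedPoint_of_halving (isClosed_symmetricUnitSequences σ)
    ⟨0, by simp [symmetricUnitSequences]⟩ (fun _ hc ↦ hc.2)
    (fun _ hc ↦ ⟨modeMap_neg hσ hjσ hc.1, abs_modeMap_le_one hα hs hsmall hσ hc.2⟩)
    (fun _ hc _ hd _ ↦ abs_modeMap_sub_le hα hs hsmall hc.2 hd.2)

lemma isModeSolution_of_modeMap_eq (hα : HasLinearGrowth α A) (hs : 0 ≤ s)
    (hsmall : 8 * A * s * (1 + j) ≤ 1) (hc : c ∈ symmetricUnitSequences σ)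
    (hfixed : modeMap α σ s j c = c) : IsModeSolution α σ s j (modeEigenvalue α s j c) c := by
  have hnear := abs_modeEigenvalue_sub_le_one hα hs hsmall hc.2
  have hcenter : c j = 1 := by rw [← hfixed, modeMap, if_pos rfl]
  have hatCenter : (modeEigenvalue α s j c - 4 * ((j : ℤ) : ℝ) ^ 2) * c j =
      s * neighbourSum α c j := by
    rw [hcenter, modeEigenvalue, Int.cast_natCast, mul_one, add_sub_cancel_left]
  refine ⟨hnear, fun k ↦ ?_, hcenter, hc.1, hc.2⟩
  by_cases hk : k.natAbs = j
  · rcases Int.natAbs_eq_iff.1 hk with rfl | rfl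
    · exact hatCenter
    · rw [hc.1, neighbourSum_neg hc.1, Int.cast_neg, neg_sq]
      linear_combination σ * hatCenter
  · have hk' := modeMap_of_natAbs_ne (α := α) (σ := σ) (s := s) (c := c) hk
    rw [hfixed, eq_div_iff (sub_four_mul_sq_ne_zero hk hnear)] at hk'
    rw [mul_comm, hk']

lemma IsModeSolution.eq_modeEigenvalue (hc : IsModeSolution α σ s j μ c) :
    μ = modeEigenvalue α s j c := by
  have := hc.recurrence j
  rw [hc.center, mul_one, Int.cast_natCast] at this
  rw [modeEigenvalue, ← this, add_sub_cancel]

lemma IsModeSolution.modeMap_eq (hc : IsModeSolution α σ s j μ c) : modeMap α σ s j c = c := by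
  funext k
  by_cases hk : k.natAbs = j
  · unfold modeMap
    split_ifs with hpos hneg
    · rw [hpos, hc.center]
    · rw [hneg, hc.symm, hc.center, mul_one]
    · omega
  · rw [modeMap_of_natAbs_ne hk, ← hc.eq_modeEigenvalue, ← hc.recurrence k,
      mul_div_cancel_left₀ _ (sub_four_mul_sq_ne_zero hk hc.near)]

theorem exists_isModeSolution (hα : HasLinearGrowth α A) (hs : 0 ≤ s)
    (hsmall : 8 * A * s * (1 + j) ≤ 1) (hσ : |σ| = 1) (hjσ : j = 0 → σ = 1) :
    ∃ μ c, IsModeSolution α σ s j μ c := by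
  obtain ⟨c, ⟨hc, hfixed⟩, -⟩ := existsUnique_modeMap_eq hα hs hsmall hσ hjσ
  exact ⟨_, c, isModeSolution_of_modeMap_eq hα hs hsmall hc hfixed⟩

theorem IsModeSolution.eigenvalue_unique {ν : ℝ} (hα : HasLinearGrowth α A) (hs : 0 ≤ s)
    (hsmall : 8 * A * s * (1 + j) ≤ 1) (hσ : |σ| = 1) (hjσ : j = 0 → σ = 1)
    (hc : IsModeSolution α σ s j μ c) (hd : IsModeSolution α σ s j ν d) : μ = ν := by
  have hcd : c = d := (existsUnique_modeMap_eq hα hs hsmall hσ hjσ).unique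
    ⟨⟨hc.symm, hc.abs_le_one⟩, hc.modeMap_eq⟩ ⟨⟨hd.symm, hd.abs_le_one⟩, hd.modeMap_eq⟩
  rw [hc.eq_modeEigenvalue, hd.eq_modeEigenvalue, hcd]

theorem exists_modeSolutions (hα : HasLinearGrowth α A) (hσ : |σ| = 1) :
    ∃ (μ : ℝ → ℕ → ℝ) (c : ℝ → ℕ → ℤ → ℝ), ∀ (s : ℝ) (j : ℕ),
      0 ≤ s → 8 * A * s * (1 + j) ≤ 1 → (j = 0 → σ = 1) →
        IsModeSolution α σ s j (μ s j) (c s j) := by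
  have hexists (s : ℝ) (j : ℕ) : ∃ p : ℝ × (ℤ → ℝ), 0 ≤ s → 8 * A * s * (1 + j) ≤ 1 →
      (j = 0 → σ = 1) → IsModeSolution α σ s j p.1 p.2 := by
    by_cases h : 0 ≤ s ∧ 8 * A * s * (1 + j) ≤ 1 ∧ (j = 0 → σ = 1)
    · obtain ⟨μ, c, hc⟩ := exists_isModeSolution hα h.1 h.2.1 hσ h.2.2
      exact ⟨(μ, c), fun _ _ _ ↦ hc⟩
    · exact ⟨(0, 0), fun h₁ h₂ h₃ ↦ absurd ⟨h₁, h₂, h₃⟩ h⟩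
  choose p hp using hexists
  exact ⟨fun s j ↦ (p s j).1, fun s j ↦ (p s j).2, hp⟩

end FixedPoint

open Asymptotics Filter Topology

section Asymptotics

lemma isBigO_pow_of_le {a b : ℕ} (h : b ≤ a) :
    (fun s : ℝ ↦ s ^ a) =O[𝓝[>] (0 : ℝ)] (fun s ↦ s ^ b) := by
  rcases h.eq_or_lt with rfl | hlt
  · exact isBigO_refl _ _
  · exact ((isLittleO_pow_pow hlt).mono nhdsWithin_le_nhds).isBigO

lemma isBigO_mul_pow {f : ℝ → ℝ} {n p : ℕ} (h : f =O[𝓝[>] (0 : ℝ)] (fun s ↦ s ^ n)) (x : ℝ)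
    (hp : p ≤ n + 1) : (fun s ↦ s * (x * f s)) =O[𝓝[>] (0 : ℝ)] (fun s ↦ s ^ p) := by
  refine IsBigO.trans ?_ (isBigO_pow_of_le hp)
  exact ((isBigO_refl (fun s : ℝ ↦ s) _).mul (h.const_mul_left x)).congr_right
    fun s ↦ (pow_succ' s n).symm

variable {α : ℤ → ℝ} {A σ : ℝ} {m : ℕ} {μ : ℝ → ℝ} {c : ℝ → ℤ → ℝ}

lemma isBigO_modeSolution_min (hc : ∀ᶠ s in 𝓝[>] (0 : ℝ), IsModeSolution α σ s m (μ s) (c s))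
    (p : ℕ) (k : ℤ) (hk : k.natAbs ≤ m) :
    (fun s ↦ c s k) =O[𝓝[>] (0 : ℝ)] (fun s ↦ s ^ min p (m - k.natAbs)) := by
  have hbounded (k : ℤ) : (fun s ↦ c s k) =O[𝓝[>] (0 : ℝ)] (fun s ↦ s ^ 0) := by
    refine IsBigO.of_bound 1 ?_
    filter_upwards [hc] with s hs
    simpa using hs.abs_le_one k
  induction p generalizing k with
  | zero => simpa using hbounded k
  | succ p ih =>
    rcases hk.eq_or_lt with heq | hlt
    · simpa [heq] using hbounded k
    have hrhs : (fun s ↦ s * neighbourSum α (c s) k)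
        =O[𝓝[>] (0 : ℝ)] (fun s ↦ s ^ min (p + 1) (m - k.natAbs)) := by
      simp only [neighbourSum, mul_add]
      exact (isBigO_mul_pow (ih (k - 1) (by omega)) (α k) (by omega)).add
        (isBigO_mul_pow (ih (k + 1) (by omega)) (α (-k)) (by omega))
    refine (IsBigO.of_bound 1 ?_).trans hrhs
    filter_upwards [hc] with s hs
    have hden := one_add_abs_le_abs_sub hlt.ne hs.near
    rw [one_mul, ← hs.recurrence k, norm_mul, Real.norm_eq_abs (_ - _)]
    exact le_mul_of_one_le_left (norm_nonneg _) (by linarith [abs_nonneg (k : ℝ)])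

lemma isBigO_modeSolution (hc : ∀ᶠ s in 𝓝[>] (0 : ℝ), IsModeSolution α σ s m (μ s) (c s))
    {k : ℤ} (hk : k.natAbs ≤ m) :
    (fun s ↦ c s k) =O[𝓝[>] (0 : ℝ)] (fun s ↦ s ^ (m - k.natAbs)) := by
  simpa using isBigO_modeSolution_min hc m k hk

lemma isBigO_modeSolution_of_natAbs_ne (hα : HasLinearGrowth α A)
    (hc : ∀ᶠ s in 𝓝[>] (0 : ℝ), IsModeSolution α σ s m (μ s) (c s)) {k : ℤ}
    (hk : k.natAbs ≠ m) : (fun s ↦ c s k) =O[𝓝[>] (0 : ℝ)] (fun s ↦ s ^ 1) := by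
  have hA := hα.pos
  refine IsBigO.of_bound (2 * A * (2 + m)) ?_
  filter_upwards [hc, self_mem_nhdsWithin] with s hs (hs0 : 0 < s)
  have hle := hs.recurrence.abs_le_div hα hs0.le hs.near hk (hs.abs_le_one _) (hs.abs_le_one _)
  rw [Real.norm_eq_abs, pow_one, Real.norm_of_nonneg hs0.le]
  refine (hle.trans (div_le_self (by positivity) ?_)).trans_eq (mul_one _)
  exact le_add_of_nonneg_right (abs_nonneg _)

lemma isBigO_modeSolution_eigenvalue (hα : HasLinearGrowth α A) (hm : 1 ≤ m)
    (hc : ∀ᶠ s in 𝓝[>] (0 : ℝ), IsModeSolution α σ s m (μ s) (c s)) :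
    (fun s ↦ μ s - 4 * (m : ℝ) ^ 2) =O[𝓝[>] (0 : ℝ)] (fun s ↦ s ^ 2) := by
  have hpred := isBigO_modeSolution_of_natAbs_ne hα hc (k := m - 1) (by omega)
  have hsucc := isBigO_modeSolution_of_natAbs_ne hα hc (k := m + 1) (by omega)
  refine ((isBigO_mul_pow hpred (α m) le_rfl).add
    (isBigO_mul_pow hsucc (α (-m)) le_rfl)).congr' ?_ .rfl
  filter_upwards [hc] with s hs
  rw [hs.eq_modeEigenvalue, modeEigenvalue, neighbourSum]
  ring

lemma isBigO_mul_sub_neighbourSum (hα : HasLinearGrowth α A) (hm : 1 ≤ m)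
    (hc : ∀ᶠ s in 𝓝[>] (0 : ℝ), IsModeSolution α σ s m (μ s) (c s)) {k : ℤ}
    (hk : k.natAbs ≤ m) :
    (fun s ↦ (4 * (m : ℝ) ^ 2 - 4 * (k : ℝ) ^ 2) * c s k - s * neighbourSum α (c s) k)
      =O[𝓝[>] (0 : ℝ)] (fun s ↦ s ^ (m - k.natAbs + 2)) := by
  refine ((isBigO_modeSolution_eigenvalue hα hm hc).mul
    (isBigO_modeSolution hc hk)).neg_left.congr' ?_ (.of_forall fun s ↦ ?_)
  · filter_upwards [hc] with s hs
    linear_combination -hs.recurrence k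
  · exact (pow_add s 2 _).symm.trans (by rw [add_comm])

/-- The leading coefficient of the entry `m - n` of a normalized solution around `m`: along the
shortest path from `m` to `m - n` each step contributes a coefficient of the recurrence divided
by the unperturbed denominator. -/
def leadCoeff (α : ℤ → ℝ) (m n : ℕ) : ℝ :=
  ∏ i ∈ Finset.range n,
    α (-((m : ℤ) - i - 1)) / (4 * (m : ℝ) ^ 2 - 4 * ((m : ℝ) - i - 1) ^ 2)

lemma isBigO_modeSolution_sub_leadCoeff (hα : HasLinearGrowth α A)
    (hc : ∀ᶠ s in 𝓝[>] (0 : ℝ), IsModeSolution α σ s m (μ s) (c s)) {n : ℕ} (hn : n < m) :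
    (fun s ↦ c s ((m : ℤ) - n) - leadCoeff α m n * s ^ n)
      =O[𝓝[>] (0 : ℝ)] (fun s ↦ s ^ (n + 2)) := by
  induction n with
  | zero =>
    refine (isBigO_zero _ _).congr' ?_ .rfl
    filter_upwards [hc] with s hs
    simp [leadCoeff, hs.center]
  | succ n ih =>
    obtain ⟨k, hk⟩ : ∃ k : ℤ, k = (m : ℤ) - n - 1 := ⟨_, rfl⟩
    have hkcast : (k : ℝ) = (m : ℝ) - n - 1 := by exact_mod_cast hk
    have hD : (4 * (m : ℝ) ^ 2 - 4 * (k : ℝ) ^ 2) ≠ 0 :=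
      sub_four_mul_sq_ne_zero (j := m) (by omega) (by simp)
    have hG : leadCoeff α m (n + 1) =
        leadCoeff α m n * (α (-k) / (4 * (m : ℝ) ^ 2 - 4 * (k : ℝ) ^ 2)) := by
      rw [leadCoeff, Finset.prod_range_succ, ← leadCoeff, hkcast, hk]
    have ih := ih (by omega)
    rw [show (m : ℤ) - n = k + 1 by omega] at ih
    rw [show (m : ℤ) - (n + 1 : ℕ) = k by omega]
    have hdiag := (isBigO_mul_sub_neighbourSum hα (by omega) hc (k := k) (by omega)).trans
      (isBigO_pow_of_le (by omega : n + 1 + 2 ≤ _))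
    have hfar := isBigO_mul_pow (p := n + 1 + 2)
      (isBigO_modeSolution hc (k := k - 1) (by omega)) (α k) (by omega)
    have hnear := isBigO_mul_pow (p := n + 1 + 2) ih (α (-k)) (by omega)
    refine (((hdiag.add hfar).add hnear).const_mul_left
      (4 * (m : ℝ) ^ 2 - 4 * (k : ℝ) ^ 2)⁻¹).congr_left fun s ↦ ?_
    rw [hG, neighbourSum]
    generalize 4 * (m : ℝ) ^ 2 - 4 * (k : ℝ) ^ 2 = D at hD
    field_simp
    ring

lemma isBigO_modeSolution_one_sub (hα : HasLinearGrowth α A) (hm : 1 ≤ m)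
    (hc : ∀ᶠ s in 𝓝[>] (0 : ℝ), IsModeSolution α σ s m (μ s) (c s)) :
    (fun s ↦ c s 1 - leadCoeff α m (m - 1) * s ^ (m - 1))
      =O[𝓝[>] (0 : ℝ)] (fun s ↦ s ^ (m - 1 + 2)) := by
  have h := isBigO_modeSolution_sub_leadCoeff hα hc (n := m - 1) (by omega)
  rwa [show (m : ℤ) - (m - 1 : ℕ) = 1 by omega] at h

lemma isBigO_evenModeSolution_zero_sub (hα : HasLinearGrowth α A) (hm : 1 ≤ m)
    (hc : ∀ᶠ s in 𝓝[>] (0 : ℝ), IsModeSolution α 1 s m (μ s) (c s)) :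
    (fun s ↦ c s 0 - 2 * α 0 * leadCoeff α m (m - 1) / (4 * (m : ℝ) ^ 2) * s ^ m)
      =O[𝓝[>] (0 : ℝ)] (fun s ↦ s ^ (m + 2)) := by
  have hdiag := isBigO_mul_sub_neighbourSum hα hm hc (k := 0) (by simp)
  have hnear := isBigO_mul_pow (p := m + 2) (isBigO_modeSolution_one_sub hα hm hc) (2 * α 0)
    (by omega)
  rw [Int.natAbs_zero, Nat.sub_zero] at hdiag
  refine ((hdiag.add hnear).const_mul_left (4 * (m : ℝ) ^ 2)⁻¹).congr' ?_ .rfl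
  filter_upwards [hc] with s hs
  have hsym : c s (-1) = c s 1 := by rw [hs.symm, one_mul]
  have hpow : s ^ m = s * s ^ (m - 1) := by rw [← pow_succ', Nat.sub_add_cancel hm]
  rw [neighbourSum, zero_sub, zero_add, hsym, hpow, neg_zero, Int.cast_zero]
  field_simp
  ring

end Asymptotics

section Pairing

/-- The pairing of two sequences over the positive indices. -/
def positivePairing (c d : ℤ → ℝ) : ℝ := ∑' n : ℕ, c (n + 1) * d (n + 1)

lemma summable_one_div_succ_sq : Summable fun n : ℕ ↦ 1 / ((n : ℝ) + 1) ^ 2 := by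
  simpa using (summable_nat_add_iff 1).2 (Real.summable_one_div_nat_pow.2 one_lt_two)

lemma abs_cast_le_abs_cast_succ_add_one (n : ℕ) : |((n : ℤ) : ℝ)| ≤ |((n + 1 : ℤ) : ℝ)| + 1 := by
  push_cast
  rw [Nat.abs_cast, abs_of_nonneg (by positivity)]
  linarith

lemma summable_mul_of_hasDecay {c d : ℤ → ℝ} (hc : HasDecay 2 c) (hd : ∀ k, |d k| ≤ 1) :
    Summable fun n : ℕ ↦ c (n + 1) * d (n + 1) := by
  obtain ⟨C, -, hb⟩ := hc.exists_abs_le_div_of_neighbour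
  refine Summable.of_norm_bounded (summable_one_div_succ_sq.mul_left C) fun n ↦ ?_
  have hcn := hb n (n + 1) (abs_cast_le_abs_cast_succ_add_one n)
  rw [Int.cast_natCast, Nat.abs_cast, add_comm 1] at hcn
  rw [norm_mul, mul_one_div]
  exact (mul_le_of_le_one_right (norm_nonneg _) (hd _)).trans hcn

lemma sub_mul_sum_range_eq {α α' : ℤ → ℝ} {s μ ν : ℝ} {c d : ℤ → ℝ}
    (htranspose : ∀ k, α' k = α (1 - k)) (hc : SolvesRecurrence α s μ c)
    (hd : SolvesRecurrence α' s ν d) (hd0 : d 0 = 0) (N : ℕ) :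
    (μ - ν) * ∑ n ∈ Finset.range N, c (n + 1) * d (n + 1) =
      s * (α 1 * (c 0 * d 1)) +
        s * (α (-N) * (c (N + 1) * d N) - α (N + 1) * (c N * d (N + 1))) := by
  induction N with
  | zero => simp [hd0]
  | succ N ih =>
    have hcN := hc (N + 1)
    have hdN := hd (N + 1)
    rw [neighbourSum] at hcN hdN
    rw [htranspose, htranspose, show (1 : ℤ) - (N + 1) = -N by ring,
      show (1 : ℤ) - -((N : ℤ) + 1) = N + 1 + 1 by ring] at hdN
    rw [add_sub_cancel_right] at hcN hdN
    rw [Finset.sum_range_succ, mul_add, ih]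
    push_cast at hcN hdN ⊢
    linear_combination d (N + 1) * hcN - c (N + 1) * hdN

lemma tendsto_boundaryTerm {α : ℤ → ℝ} {A : ℝ} (hα : HasLinearGrowth α A) {c d : ℤ → ℝ}
    (hc : HasDecay 2 c) (hd : ∀ k, |d k| ≤ 1) :
    Tendsto (fun N : ℕ ↦ α (-N) * (c (N + 1) * d N) - α (N + 1) * (c N * d (N + 1)))
      atTop (𝓝 0) := by
  obtain ⟨C, _, hb⟩ := hc.exists_abs_le_div_of_neighbour
  have hA := hα.pos
  have hlim : Tendsto (fun N : ℕ ↦ 3 * A * C / ((N : ℝ) + 1)) atTop (𝓝 0) :=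
    tendsto_const_nhds.div_atTop (tendsto_atTop_add_const_right _ _ tendsto_natCast_atTop_atTop)
  refine squeeze_zero_norm (fun N ↦ ?_) hlim
  have hleft : |α (-N)| ≤ A * (N + 1) := by simpa [add_comm] using hα.abs_le (-N)
  have hright : |α (N + 1)| ≤ 2 * (A * (N + 1)) := by
    have := hα.abs_le (N + 1)
    push_cast at this
    rw [abs_of_nonneg (by positivity : (0 : ℝ) ≤ N + 1)] at this
    nlinarith [(N.cast_nonneg : (0 : ℝ) ≤ N)]
  have hcN := hb N N (by linarith)
  have hcN' := hb N (N + 1) (abs_cast_le_abs_cast_succ_add_one N)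
  rw [Int.cast_natCast, Nat.abs_cast, add_comm (1 : ℝ)] at hcN hcN'
  have hmul {x y z X Y : ℝ} (hx : |x| ≤ X) (hy : |y| ≤ Y) (hz : |z| ≤ 1) :
      |x * (y * z)| ≤ X * Y := by
    rw [abs_mul, abs_mul]
    exact mul_le_mul hx ((mul_le_of_le_one_right (abs_nonneg _) hz).trans hy) (by positivity)
      ((abs_nonneg _).trans hx)
  calc _ ≤ A * (N + 1) * (C / (N + 1) ^ 2) + 2 * (A * (N + 1)) * (C / (N + 1) ^ 2) :=
        (abs_sub _ _).trans (add_le_add (hmul hleft hcN' (hd _)) (hmul hright hcN (hd _)))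
    _ = 3 * A * C / (N + 1) := by
        field_simp
        ring

variable {α α' : ℤ → ℝ} {A s μ ν : ℝ} {m : ℕ} {c d : ℤ → ℝ}

theorem sub_mul_positivePairing (hα : HasLinearGrowth α A) (hs : 0 ≤ s)
    (htranspose : ∀ k, α' k = α (1 - k)) (hc : IsModeSolution α 1 s m μ c)
    (hd : IsModeSolution α' (-1) s m ν d) :
    (μ - ν) * positivePairing c d = s * (α 1 * (c 0 * d 1)) := by
  have hdecay := hc.hasDecay hα hs 2
  have hd0 : d 0 = 0 := by
    have := hd.symm 0
    rw [neg_zero] at this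
    linarith
  have hsum := (summable_mul_of_hasDecay hdecay hd.abs_le_one).hasSum.tendsto_sum_nat.const_mul
    (μ - ν)
  have hboundary := ((tendsto_boundaryTerm hα hdecay hd.abs_le_one).const_mul s).const_add
    (s * (α 1 * (c 0 * d 1)))
  rw [mul_zero, add_zero] at hboundary
  exact tendsto_nhds_unique hsum <| hboundary.congr fun N ↦
    (sub_mul_sum_range_eq htranspose hc.recurrence hd.recurrence hd0 N).symm

lemma IsModeSolution.abs_succ_le {σ : ℝ} (hα : HasLinearGrowth α A) (hs : 0 ≤ s)
    (hc : IsModeSolution α σ s m μ c) {n : ℕ} (hn : n + 1 ≠ m) :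
    |c (n + 1)| ≤ 2 * A * (2 + m) * s / (n + 1) := by
  have hA := hα.pos
  have h := hc.recurrence.abs_le_div hα hs hc.near (k := n + 1) (by omega)
    (hc.abs_le_one _) (hc.abs_le_one _)
  push_cast at h
  rw [mul_one, abs_of_nonneg (by positivity : (0 : ℝ) ≤ (n : ℝ) + 1)] at h
  refine h.trans (div_le_div_of_nonneg_left (by positivity) (by positivity) ?_)
  linarith

theorem abs_positivePairing_sub_one_le (hα : HasLinearGrowth α A) (hα' : HasLinearGrowth α' A)
    (hs : 0 ≤ s) (hm : 1 ≤ m) {σ τ : ℝ} (hc : IsModeSolution α σ s m μ c)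
    (hd : IsModeSolution α' τ s m ν d) :
    |positivePairing c d - 1| ≤ (2 * A * (2 + m) * s) ^ 2 * ∑' n : ℕ, 1 / ((n : ℝ) + 1) ^ 2 := by
  have hA := hα.pos
  have hsum := (summable_mul_of_hasDecay (hc.hasDecay hα hs 2) hd.abs_le_one).hasSum
  have hsub := hsum.sub (hasSum_ite_eq (m - 1) (1 : ℝ))
  rw [positivePairing, ← hsub.tsum_eq, ← Real.norm_eq_abs, ← tsum_mul_left]
  refine tsum_of_norm_bounded (summable_one_div_succ_sq.mul_left _).hasSum fun n ↦ ?_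
  split_ifs with hn
  · rw [show (n : ℤ) + 1 = m by omega, hc.center, hd.center, mul_one, sub_self, norm_zero]
    positivity
  · rw [sub_zero, Real.norm_eq_abs, abs_mul]
    refine (mul_le_mul (hc.abs_succ_le hα hs (by omega)) (hd.abs_succ_le hα' hs (by omega))
      (abs_nonneg _) (by positivity)).trans_eq ?_
    field_simp

end Pairing

lemma isBigO_sub_mul_of_isBigO_sub_one {x S : ℝ → ℝ} {n : ℕ}
    (hS : (fun s ↦ S s - 1) =O[𝓝[>] (0 : ℝ)] (fun s ↦ s ^ 2))
    (hxS : (fun s ↦ x s * S s) =O[𝓝[>] (0 : ℝ)] (fun s ↦ s ^ n)) :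
    (fun s ↦ x s - x s * S s) =O[𝓝[>] (0 : ℝ)] (fun s ↦ s ^ (n + 2)) := by
  have hsq : Tendsto (fun s : ℝ ↦ s ^ 2) (𝓝[>] 0) (𝓝 0) := by
    simpa using ((continuous_pow 2).tendsto (0 : ℝ)).mono_left nhdsWithin_le_nhds
  have hS1 : Tendsto (fun s ↦ ‖S s‖) (𝓝[>] 0) (𝓝 1) := by
    simpa using ((hS.trans_tendsto hsq).add_const 1).norm
  have hx : x =O[𝓝[>] (0 : ℝ)] (fun s ↦ s ^ n) := by
    refine (IsBigO.of_bound 2 ?_).trans hxS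
    filter_upwards [hS1.eventually_const_le (by norm_num : (1 / 2 : ℝ) < 1)] with s hs
    rw [norm_mul]
    nlinarith [norm_nonneg (x s)]
  refine (hx.mul hS).neg_left.congr (fun s ↦ by ring) fun s ↦ (pow_add s n 2).symm

lemma isBigO_mul_modeSolutions_sub {α α' : ℤ → ℝ} {A : ℝ} (hα : HasLinearGrowth α A)
    (hα' : HasLinearGrowth α' A) {m : ℕ} (hm : 1 ≤ m) {σ : ℝ} {μ ν : ℝ → ℝ} {c d : ℝ → ℤ → ℝ}
    (hc : ∀ᶠ s in 𝓝[>] (0 : ℝ), IsModeSolution α 1 s m (μ s) (c s))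
    (hd : ∀ᶠ s in 𝓝[>] (0 : ℝ), IsModeSolution α' σ s m (ν s) (d s)) :
    (fun s ↦ s * (α 1 * (c s 0 * d s 1)) -
      α 1 * (2 * α 0 * leadCoeff α m (m - 1) / (4 * (m : ℝ) ^ 2)) *
        leadCoeff α' m (m - 1) * s ^ (2 * m)) =O[𝓝[>] (0 : ℝ)] (fun s ↦ s ^ (2 * m + 2)) := by
  have hd1 : (fun s ↦ d s 1) =O[𝓝[>] (0 : ℝ)] (fun s ↦ s ^ (m - 1)) := by
    simpa using isBigO_modeSolution hd (k := 1) (by simpa using hm)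
  have hleft := (isBigO_evenModeSolution_zero_sub hα hm hc).mul hd1
  have hright := ((isBigO_refl (fun s : ℝ ↦ s ^ m) (𝓝[>] 0)).const_mul_left
    (2 * α 0 * leadCoeff α m (m - 1) / (4 * (m : ℝ) ^ 2))).mul
      (isBigO_modeSolution_one_sub hα' hm hd)
  simp only [← pow_add] at hleft hright
  rw [show m + 2 + (m - 1) = 2 * m + 1 by omega] at hleft
  rw [show m + (m - 1 + 2) = 2 * m + 1 by omega] at hright
  refine (isBigO_mul_pow (hleft.add hright) (α 1) le_rfl).congr_left fun s ↦ ?_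
  rw [show 2 * m = m + (m - 1) + 1 by omega]
  ring

theorem isBigO_sub_modeEigenvalues {α α' : ℤ → ℝ} {A : ℝ} (hα : HasLinearGrowth α A)
    (hα' : HasLinearGrowth α' A) (htranspose : ∀ k, α' k = α (1 - k)) {m : ℕ} (hm : 1 ≤ m)
    {μ ν : ℝ → ℝ} {c d : ℝ → ℤ → ℝ}
    (hc : ∀ᶠ s in 𝓝[>] (0 : ℝ), IsModeSolution α 1 s m (μ s) (c s))
    (hd : ∀ᶠ s in 𝓝[>] (0 : ℝ), IsModeSolution α' (-1) s m (ν s) (d s)) :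
    (fun s ↦ (μ s - ν s) - α 1 * (2 * α 0 * leadCoeff α m (m - 1) / (4 * (m : ℝ) ^ 2)) *
      leadCoeff α' m (m - 1) * s ^ (2 * m)) =O[𝓝[>] (0 : ℝ)] (fun s ↦ s ^ (2 * m + 2)) := by
  have hc0 : (fun s ↦ c s 0) =O[𝓝[>] (0 : ℝ)] (fun s ↦ s ^ m) := by
    simpa using isBigO_modeSolution hc (k := 0) (by simp)
  have hd1 : (fun s ↦ d s 1) =O[𝓝[>] (0 : ℝ)] (fun s ↦ s ^ (m - 1)) := by
    simpa using isBigO_modeSolution hd (k := 1) (by simpa using hm)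
  have hpairing : ∀ᶠ s in 𝓝[>] (0 : ℝ),
      s * (α 1 * (c s 0 * d s 1)) = (μ s - ν s) * positivePairing (c s) (d s) := by
    filter_upwards [hc, hd, self_mem_nhdsWithin] with s hcs hds (hs : 0 < s)
    exact (sub_mul_positivePairing hα hs.le htranspose hcs hds).symm
  have hnear_one : (fun s ↦ positivePairing (c s) (d s) - 1) =O[𝓝[>] (0 : ℝ)] (fun s ↦ s ^ 2) := by
    refine IsBigO.of_bound ((2 * A * (2 + m)) ^ 2 * ∑' n : ℕ, 1 / ((n : ℝ) + 1) ^ 2) ?_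
    filter_upwards [hc, hd, self_mem_nhdsWithin] with s hcs hds (hs : 0 < s)
    refine (abs_positivePairing_sub_one_le hα hα' hs.le hm hcs hds).trans_eq ?_
    rw [Real.norm_of_nonneg (by positivity)]
    ring
  have hproduct := isBigO_mul_modeSolutions_sub hα hα' hm hc hd
  have hsize : (fun s ↦ (μ s - ν s) * positivePairing (c s) (d s))
      =O[𝓝[>] (0 : ℝ)] (fun s ↦ s ^ (2 * m)) := by
    have h := hc0.mul hd1
    simp only [← pow_add] at h
    exact (isBigO_mul_pow h (α 1) (by omega)).congr' hpairing .rfl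
  refine ((isBigO_sub_mul_of_isBigO_sub_one hnear_one hsize).add hproduct).congr' ?_ .rfl
  filter_upwards [hpairing] with s hs
  rw [hs]
  ring

section LeadingConstant

open Finset

lemma leadCoeff_eq_prod_range (α : ℤ → ℝ) (n : ℕ) :
    leadCoeff α (n + 1) n = ∏ i ∈ range n,
      α (-(i + 1)) / (4 * ((n : ℝ) + 1) ^ 2 - 4 * ((i : ℝ) + 1) ^ 2) := by
  rw [leadCoeff, ← prod_range_reflect]
  refine prod_congr rfl fun i hi ↦ ?_
  have hindex : ((n + 1 : ℕ) : ℤ) - (n - 1 - i : ℕ) - 1 = i + 1 := by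
    have := mem_range.1 hi
    omega
  have hcast : ((n + 1 : ℕ) : ℝ) - (n - 1 - i : ℕ) - 1 = i + 1 := by exact_mod_cast hindex
  rw [hindex, hcast, Nat.cast_succ]

lemma prod_range_sub_four_mul_sq_mul_succ (n : ℕ) :
    (∏ i ∈ range n, (4 * ((n : ℝ) + 1) ^ 2 - 4 * ((i : ℝ) + 1) ^ 2)) * ((n : ℝ) + 1) =
      4 ^ n * ((2 * n + 1).factorial : ℝ) := by
  have hdesc : ∏ i ∈ range n, ((n : ℝ) - i) = n.factorial := by
    rw [← Nat.descFactorial_self, Nat.descFactorial_eq_prod_range, Nat.cast_prod]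
    exact prod_congr rfl fun i hi ↦ (Nat.cast_sub (mem_range.1 hi).le).symm
  have hasc : ∏ i ∈ range n, ((n : ℝ) + 2 + i) = (n + 2).ascFactorial n := by
    rw [Nat.ascFactorial_eq_prod_range]
    push_cast
    rfl
  have hfactor (i : ℕ) : 4 * ((n : ℝ) + 1) ^ 2 - 4 * ((i : ℝ) + 1) ^ 2 =
      4 * ((n - i) * (n + 2 + i)) := by ring
  have hfactorial : ((n + 1).factorial : ℝ) * (n + 2).ascFactorial n = (2 * n + 1).factorial := by
    rw [show 2 * n + 1 = n + 1 + n by ring]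
    exact_mod_cast Nat.factorial_mul_ascFactorial (n + 1) n
  simp only [hfactor]
  rw [prod_mul_distrib, prod_mul_distrib, prod_const, card_range, hdesc, hasc, ← hfactorial,
    Nat.factorial_succ, Nat.cast_mul, Nat.cast_succ]
  ring

lemma prod_Icc_mul_one_sub {α α' : ℤ → ℝ} (htranspose : ∀ k, α' k = α (1 - k)) (n : ℕ) :
    ∏ k ∈ Icc 1 (n + 1), (α k * α (1 - k)) =
      α 1 * α 0 * ((∏ i ∈ range n, α (-(i + 1))) * ∏ i ∈ range n, α' (-(i + 1))) := by
  rw [← prod_mul_distrib, ← Ico_add_one_right_eq_Icc, prod_eq_prod_Ico_succ_bot (by omega),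
    prod_Ico_eq_prod_range]
  congr 1
  refine prod_congr (by congr 1) fun i _ ↦ ?_
  rw [htranspose, mul_comm]
  push_cast
  congr 2 <;> ring

theorem leadingConstant_eq {α α' : ℤ → ℝ} (htranspose : ∀ k, α' k = α (1 - k)) {m : ℕ}
    (hm : 1 ≤ m) :
    α 1 * (2 * α 0 * leadCoeff α m (m - 1) / (4 * (m : ℝ) ^ 2)) * leadCoeff α' m (m - 1) =
      8 * (∏ k ∈ Icc 1 m, (α k * α (1 - k))) /
        (2 ^ (4 * m) * ((2 * m - 1).factorial : ℝ) ^ 2) := by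
  obtain ⟨n, rfl⟩ : ∃ n, m = n + 1 := ⟨m - 1, by omega⟩
  have hD := prod_range_sub_four_mul_sq_mul_succ n
  rw [prod_Icc_mul_one_sub htranspose, Nat.add_sub_cancel, leadCoeff_eq_prod_range,
    leadCoeff_eq_prod_range, prod_div_distrib, prod_div_distrib, Nat.cast_succ,
    show 2 * (n + 1) - 1 = 2 * n + 1 by omega]
  generalize ∏ i ∈ range n, (4 * ((n : ℝ) + 1) ^ 2 - 4 * ((i : ℝ) + 1) ^ 2) = D at hD ⊢
  have hD0 : D ≠ 0 := by
    rintro rfl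
    have : (4 : ℝ) ^ n * (2 * n + 1).factorial ≠ 0 := by positivity
    exact this (by rw [← hD, zero_mul])
  have hfactorial : ((2 * n + 1).factorial : ℝ) = D * (n + 1) / 4 ^ n := by
    rw [hD]
    field_simp
  have hpow : (2 : ℝ) ^ (4 * (n + 1)) = 16 * (4 ^ n) ^ 2 := by
    rw [pow_right_comm, pow_mul, pow_succ']
    norm_num
  rw [hfactorial, hpow]
  field_simp
  ring

end LeadingConstant

section Gauge

/-- The potential `b s cos 2x + c s² cos 4x` with `c = -2 β²`; both signs of `β` give the same
potential but different recurrences. -/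
def hillPotential (b β s x : ℝ) : ℝ :=
  b * s * cos (2 * x) - 2 * (β * s) ^ 2 * cos (4 * x)

/-- The exponential factor whose removal from the solutions of Hill's equation turns the equation
into a three-term recurrence. -/
def gaugeFactor (β x : ℝ) : ℝ := exp (-β * cos (2 * x))

/-- The Hill operator conjugated by `gaugeFactor (β * s)`, as a function of the values
`y, y₁, y₂` of a function and of its first two derivatives at `x`. -/
def gaugedOperator (b β s x y y₁ y₂ : ℝ) : ℝ :=
  -y₂ - 4 * (β * s) * sin (2 * x) * y₁ +
    ((b - 4 * β) * s * cos (2 * x) - 2 * (β * s) ^ 2) * y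

variable {b β s lam x : ℝ} {y y₁ y₂ : ℝ → ℝ}

lemma gaugeFactor_pos (β x : ℝ) : 0 < gaugeFactor β x := exp_pos _

lemma gaugeFactor_neg_mul_gaugeFactor (β x : ℝ) :
    gaugeFactor (-β) x * gaugeFactor β x = 1 := by
  rw [gaugeFactor, gaugeFactor, ← exp_add, neg_mul, neg_add_cancel, exp_zero]

@[fun_prop]
lemma continuous_gaugeFactor (β : ℝ) : Continuous (gaugeFactor β) := by
  unfold gaugeFactor; fun_prop

lemma periodic_gaugeFactor (β : ℝ) : Function.Periodic (gaugeFactor β) π := fun x ↦ by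
  rw [gaugeFactor, mul_add, cos_add_two_pi, gaugeFactor]

lemma gaugeFactor_apply_neg (β x : ℝ) : gaugeFactor β (-x) = gaugeFactor β x := by
  rw [gaugeFactor, mul_neg, cos_neg, gaugeFactor]

lemma hillPotential_apply_neg (b β s x : ℝ) :
    hillPotential b β s (-x) = hillPotential b β s x := by
  simp only [hillPotential, mul_neg, cos_neg]

lemma hillPotential_neg (b β s : ℝ) : hillPotential b (-β) s = hillPotential b β s := by
  funext x
  unfold hillPotential
  ring

lemma hasDerivAt_gaugeFactor (β x : ℝ) :
    HasDerivAt (gaugeFactor β) (gaugeFactor β x * (2 * β * sin (2 * x))) x :=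
  (((hasDerivAt_const_mul (2 : ℝ)).cos.const_mul (-β)).exp).congr_deriv
    (by unfold gaugeFactor; ring)

lemma hasDerivAt_gaugeFactor_mul (hy : HasDerivAt y (y₁ x) x) :
    HasDerivAt (fun x ↦ gaugeFactor β x * y x)
      (gaugeFactor β x * (2 * β * sin (2 * x) * y x + y₁ x)) x :=
  ((hasDerivAt_gaugeFactor β x).mul hy).congr_deriv (by ring)

lemma hasDerivAt_deriv_gaugeFactor_mul (b : ℝ) (hy : HasDerivAt y (y₁ x) x)
    (hy₁ : HasDerivAt y₁ (y₂ x) x) :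
    HasDerivAt (fun x ↦ gaugeFactor (β * s) x * (2 * (β * s) * sin (2 * x) * y x + y₁ x))
      (gaugeFactor (β * s) x *
        (hillPotential b β s x * y x - gaugedOperator b β s x (y x) (y₁ x) (y₂ x))) x := by
  have hcos : cos (4 * x) = 1 - 2 * sin (2 * x) ^ 2 := by
    rw [show 4 * x = 2 * (2 * x) by ring, cos_two_mul, cos_sq']; ring
  have hsin := (hasDerivAt_const_mul (x := x) (2 : ℝ)).sin.const_mul (2 * (β * s))
  refine ((hasDerivAt_gaugeFactor (β * s) x).mul ((hsin.mul hy).add hy₁)).congr_deriv ?_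
  rw [hillPotential, gaugedOperator, hcos]
  simp only [Pi.add_apply, Pi.mul_apply]
  ring

lemma isPerEF_of_hasDerivAt {v : ℝ → ℝ} (hy : ∀ x, HasDerivAt y (y₁ x) x)
    (hy₁ : ∀ x, HasDerivAt y₁ (y₂ x) x) (hcont : Continuous y₂)
    (hode : ∀ x, -y₂ x + v x * y x = lam * y x) (hper : Function.Periodic y π) :
    IsPerEF v lam y := by
  have hderiv : deriv y = y₁ := funext fun x ↦ (hy x).deriv
  have hderiv₁ : deriv y₁ = y₂ := funext fun x ↦ (hy₁ x).deriv
  refine ⟨?_, by rwa [hderiv, hderiv₁], hper⟩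
  rw [← one_add_one_eq_two, contDiff_succ_iff_deriv, hderiv, contDiff_one_iff_deriv, hderiv₁]
  exact ⟨fun x ↦ (hy x).differentiableAt, by simp, fun x ↦ (hy₁ x).differentiableAt, hcont⟩

lemma isPerEF_gaugeFactor_mul (hy : ∀ x, HasDerivAt y (y₁ x) x)
    (hy₁ : ∀ x, HasDerivAt y₁ (y₂ x) x) (hcont : Continuous y₂)
    (hode : ∀ x, gaugedOperator b β s x (y x) (y₁ x) (y₂ x) = lam * y x)
    (hper : Function.Periodic y π) :
    IsPerEF (hillPotential b β s) lam (fun x ↦ gaugeFactor (β * s) x * y x) := by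
  have hcont_y : Continuous y := continuous_iff_continuousAt.2 fun x ↦ (hy x).continuousAt
  have hcont_y₁ : Continuous y₁ := continuous_iff_continuousAt.2 fun x ↦ (hy₁ x).continuousAt
  refine isPerEF_of_hasDerivAt (fun x ↦ hasDerivAt_gaugeFactor_mul (hy x))
    (fun x ↦ hasDerivAt_deriv_gaugeFactor_mul b (hy x) (hy₁ x)) ?_ (fun x ↦ ?_)
    ((periodic_gaugeFactor _).mul hper)
  · unfold hillPotential gaugedOperator
    fun_prop
  · linear_combination gaugeFactor (β * s) x * hode x

end Gauge

section FourierModes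

/-- The real Fourier modes of period `π`: cosines for the phase `θ = 0`, sines for
`θ = π / 2`. -/
def fourierMode (θ : ℝ) (k : ℤ) (x : ℝ) : ℝ := cos (2 * k * x - θ)

/-- The derivative of `fourierMode`. -/
def fourierModeDeriv (θ : ℝ) (k : ℤ) (x : ℝ) : ℝ := -(2 * k * sin (2 * k * x - θ))

/-- The coefficients of the recurrence obtained from `hillPotential b β s`. -/
def recCoeff (b β : ℝ) (k : ℤ) : ℝ := b / 2 + 4 * β * (k - 1 / 2)

lemma recCoeff_neg (b β : ℝ) (k : ℤ) : recCoeff b (-β) k = recCoeff b β (1 - k) := by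
  unfold recCoeff; push_cast; ring

lemma hasLinearGrowth_recCoeff (b β : ℝ) :
    HasLinearGrowth (recCoeff b β) (|b| + 4 * |β| + 1) where
  pos := by positivity
  abs_le k := by
    have hk : |(k : ℝ) - 1 / 2| ≤ |(k : ℝ)| + 1 := by
      refine (abs_sub _ _).trans ?_
      norm_num
    calc |recCoeff b β k| ≤ |b / 2| + |4 * β * (k - 1 / 2)| := abs_add_le _ _
      _ = |b| / 2 + 4 * |β| * |(k : ℝ) - 1 / 2| := by simp [abs_div, abs_mul]
      _ ≤ |b| / 2 + 4 * |β| * (|(k : ℝ)| + 1) := by gcongr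
      _ ≤ (|b| + 4 * |β| + 1) * (1 + |(k : ℝ)|) := by
        have : 0 ≤ |b| * |(k : ℝ)| := by positivity
        linarith [abs_nonneg b, abs_nonneg (k : ℝ)]

variable {θ σ : ℝ}

lemma hasDerivAt_fourierMode (θ : ℝ) (k : ℤ) (x : ℝ) :
    HasDerivAt (fourierMode θ k) (fourierModeDeriv θ k x) x :=
  ((hasDerivAt_const_mul (2 * (k : ℝ))).sub_const θ).cos.congr_deriv
    (by unfold fourierModeDeriv; ring)

lemma hasDerivAt_fourierModeDeriv (θ : ℝ) (k : ℤ) (x : ℝ) :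
    HasDerivAt (fourierModeDeriv θ k) (-(4 * (k : ℝ) ^ 2 * fourierMode θ k x)) x :=
  (((hasDerivAt_const_mul (2 * (k : ℝ))).sub_const θ).sin.const_mul (2 * (k : ℝ))).neg.congr_deriv
    (by unfold fourierMode; ring)

@[fun_prop]
lemma continuous_fourierMode (θ : ℝ) (k : ℤ) : Continuous (fourierMode θ k) := by
  unfold fourierMode; fun_prop

lemma abs_fourierMode_le_one (θ : ℝ) (k : ℤ) (x : ℝ) : |fourierMode θ k x| ≤ 1 :=
  abs_cos_le_one _

lemma periodic_fourierMode (θ : ℝ) (k : ℤ) : Function.Periodic (fourierMode θ k) π := fun x ↦ by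
  rw [fourierMode, show 2 * (k : ℝ) * (x + π) - θ = 2 * k * x - θ + k * (2 * π) by ring,
    cos_add_int_mul_two_pi, fourierMode]

lemma periodic_fourierModeDeriv (θ : ℝ) (k : ℤ) :
    Function.Periodic (fourierModeDeriv θ k) π := fun x ↦ by
  rw [fourierModeDeriv, show 2 * (k : ℝ) * (x + π) - θ = 2 * k * x - θ + k * (2 * π) by ring,
    sin_add_int_mul_two_pi, fourierModeDeriv]

lemma gaugedOperator_fourierMode (b β s θ : ℝ) (k : ℤ) (x : ℝ) :
    gaugedOperator b β s x (fourierMode θ k x) (fourierModeDeriv θ k x)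
        (-(4 * (k : ℝ) ^ 2 * fourierMode θ k x)) =
      (4 * (k : ℝ) ^ 2 - 2 * (β * s) ^ 2) * fourierMode θ k x +
        s * neighbourSum (recCoeff b β) (fun l ↦ fourierMode θ l x) k := by
  have hpred : fourierMode θ (k - 1) x = cos (2 * k * x - θ - 2 * x) := by
    unfold fourierMode; push_cast; ring_nf
  have hsucc : fourierMode θ (k + 1) x = cos (2 * k * x - θ + 2 * x) := by
    unfold fourierMode; push_cast; ring_nf
  simp only [neighbourSum]
  rw [hpred, hsucc, cos_sub, cos_add]
  unfold gaugedOperator fourierMode fourierModeDeriv recCoeff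
  push_cast
  ring

/-- The two phases with the parity of their Fourier modes: cosines are even (`σ = 1`) and sines
odd (`σ = -1`). -/
def IsParityPhase (θ σ : ℝ) : Prop := (θ = 0 ∧ σ = 1) ∨ (θ = π / 2 ∧ σ = -1)

lemma IsParityPhase.mul_self (h : IsParityPhase θ σ) : σ * σ = 1 := by
  rcases h with ⟨_, rfl⟩ | ⟨_, rfl⟩ <;> norm_num

lemma IsParityPhase.cos_two_mul (h : IsParityPhase θ σ) : cos (2 * θ) = σ := by
  rcases h with ⟨rfl, rfl⟩ | ⟨rfl, rfl⟩
  · rw [mul_zero, cos_zero]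
  · rw [mul_div_cancel₀ π two_ne_zero, cos_pi]

lemma IsParityPhase.fourierMode_apply_neg (h : IsParityPhase θ σ) (k : ℤ) (x : ℝ) :
    fourierMode θ k (-x) = σ * fourierMode θ k x := by
  rcases h with ⟨rfl, rfl⟩ | ⟨rfl, rfl⟩ <;> simp [fourierMode, cos_sub_pi_div_two]

lemma IsParityPhase.fourierMode_neg (h : IsParityPhase θ σ) (k : ℤ) (x : ℝ) :
    fourierMode θ (-k) x = σ * fourierMode θ k x := by
  rw [← h.fourierMode_apply_neg]
  unfold fourierMode
  push_cast
  ring_nf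

end FourierModes

section ModeCoefficients

/-- The Fourier coefficients of a `π`-periodic function, up to normalization. -/
def modeCoeff (θ : ℝ) (h : ℝ → ℝ) (k : ℤ) : ℝ := ∫ x in (0 : ℝ)..π, h x * fourierMode θ k x

/-- The Fourier coefficients that satisfy the three-term recurrence when `f` solves Hill's
equation with potential `hillPotential b β s`; here `r = β * s`. -/
def gaugedCoeff (θ r : ℝ) (f : ℝ → ℝ) : ℤ → ℝ := modeCoeff θ fun x ↦ gaugeFactor r x * f x

variable {θ σ : ℝ} {f h : ℝ → ℝ}

lemma intervalIntegrable_mul_fourierMode (hcont : Continuous h) (k : ℤ) :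
    IntervalIntegrable (fun x ↦ h x * fourierMode θ k x) MeasureTheory.volume 0 π :=
  Continuous.intervalIntegrable (by fun_prop) _ _

lemma IsParityPhase.modeCoeff_neg (hθ : IsParityPhase θ σ) (h : ℝ → ℝ) (k : ℤ) :
    modeCoeff θ h (-k) = σ * modeCoeff θ h k := by
  unfold modeCoeff
  rw [← intervalIntegral.integral_const_mul]
  congr 1
  funext x
  rw [hθ.fourierMode_neg, mul_left_comm]

lemma exists_forall_abs_modeCoeff_le (θ : ℝ) (hcont : Continuous h) :
    ∃ B, ∀ k, |modeCoeff θ h k| ≤ B := by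
  refine ⟨∫ x in (0 : ℝ)..π, |h x|, fun k ↦ ?_⟩
  refine (intervalIntegral.abs_integral_le_integral_abs pi_pos.le).trans ?_
  refine intervalIntegral.integral_mono_on pi_pos.le
    (intervalIntegrable_mul_fourierMode hcont k).abs (hcont.abs.intervalIntegrable _ _)
    fun x _ ↦ ?_
  rw [abs_mul]
  exact mul_le_of_le_one_right (abs_nonneg _) (abs_fourierMode_le_one θ k x)

lemma modeCoeff_sub_smul {g : ℝ → ℝ} (hf : Continuous f) (hg : Continuous g) (t : ℝ) (k : ℤ) :
    modeCoeff θ (fun x ↦ f x - t * g x) k = modeCoeff θ f k - t * modeCoeff θ g k := by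
  unfold modeCoeff
  rw [← intervalIntegral.integral_const_mul, ← intervalIntegral.integral_sub
    (intervalIntegrable_mul_fourierMode hf k)
    ((intervalIntegrable_mul_fourierMode hg k).const_mul t)]
  congr 1
  funext x
  ring

lemma neighbourSum_modeCoeff (α : ℤ → ℝ) (hcont : Continuous h) (k : ℤ) :
    neighbourSum α (modeCoeff θ h) k =
      ∫ x in (0 : ℝ)..π, h x * neighbourSum α (fun l ↦ fourierMode θ l x) k := by
  unfold neighbourSum modeCoeff
  rw [← intervalIntegral.integral_const_mul, ← intervalIntegral.integral_const_mul,
    ← intervalIntegral.integral_add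
      ((intervalIntegrable_mul_fourierMode hcont _).const_mul _)
      ((intervalIntegrable_mul_fourierMode hcont _).const_mul _)]
  congr 1
  funext x
  ring

lemma periodic_deriv {p : ℝ} (hper : Function.Periodic f p) :
    Function.Periodic (deriv f) p := fun x ↦ by
  rw [← deriv_comp_add_const, funext hper]

lemma IsPerEF.hasDerivAt {v : ℝ → ℝ} {lam : ℝ} (hf : IsPerEF v lam f) (x : ℝ) :
    HasDerivAt f (deriv f x) x :=
  (hf.1.differentiable two_ne_zero x).hasDerivAt

lemma IsPerEF.hasDerivAt_deriv {v : ℝ → ℝ} {lam : ℝ} (hf : IsPerEF v lam f) (x : ℝ) :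
    HasDerivAt (deriv f) (deriv (deriv f) x) x :=
  (hf.1.deriv'.differentiable one_ne_zero x).hasDerivAt

lemma IsPerEF.continuous_deriv_deriv {v : ℝ → ℝ} {lam : ℝ} (hf : IsPerEF v lam f) :
    Continuous (deriv (deriv f)) :=
  hf.1.deriv'.continuous_deriv le_rfl

lemma IsPerEF.integral_mul_eq_zero {v ψ ψ₁ ψ₂ : ℝ → ℝ} {lam : ℝ} (hf : IsPerEF v lam f)
    (hψ : ∀ x, HasDerivAt ψ (ψ₁ x) x) (hψ₁ : ∀ x, HasDerivAt ψ₁ (ψ₂ x) x)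
    (hcont : Continuous ψ₂) (hper : Function.Periodic ψ π) (hper₁ : Function.Periodic ψ₁ π) :
    ∫ x in (0 : ℝ)..π, f x * (-ψ₂ x + v x * ψ x - lam * ψ x) = 0 := by
  have hperf : Function.Periodic f π := hf.2.2
  have hwronskian (x : ℝ) : HasDerivAt (fun x ↦ deriv f x * ψ x - f x * ψ₁ x)
      (f x * (-ψ₂ x + v x * ψ x - lam * ψ x)) x :=
    (((hf.hasDerivAt_deriv x).mul (hψ x)).sub ((hf.hasDerivAt x).mul (hψ₁ x))).congr_deriv
      (by linear_combination (-ψ x) * hf.2.1 x)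
  have hintegrand : (fun x ↦ f x * (-ψ₂ x + v x * ψ x - lam * ψ x)) =
      fun x ↦ deriv (deriv f) x * ψ x - f x * ψ₂ x := by
    funext x
    linear_combination ψ x * hf.2.1 x
  have hcont_ψ : Continuous ψ := continuous_iff_continuousAt.2 fun x ↦ (hψ x).continuousAt
  have hcont_integrand : Continuous fun x ↦ f x * (-ψ₂ x + v x * ψ x - lam * ψ x) := by
    rw [hintegrand]
    exact (hf.continuous_deriv_deriv.mul hcont_ψ).sub (hf.1.continuous.mul hcont)
  rw [intervalIntegral.integral_eq_sub_of_hasDerivAt (fun x _ ↦ hwronskian x)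
    (hcont_integrand.intervalIntegrable _ _), hperf.eq, (periodic_deriv hperf).eq, hper.eq,
    hper₁.eq, sub_self]

lemma IsPerEF.solvesRecurrence_gaugedCoeff {b β s lam : ℝ}
    (hf : IsPerEF (hillPotential b β s) lam f) (θ : ℝ) :
    SolvesRecurrence (recCoeff b β) s (lam + 2 * (β * s) ^ 2)
      (gaugedCoeff θ (β * s) f) := by
  intro k
  have hcont : Continuous fun x ↦ gaugeFactor (β * s) x * f x :=
    (continuous_gaugeFactor _).mul hf.1.continuous
  have hper_sin : Function.Periodic (fun x ↦ 2 * (β * s) * sin (2 * x)) π := fun x ↦ by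
    simp only [mul_add, sin_add_two_pi]
  have hgreen := hf.integral_mul_eq_zero
    (fun x ↦ hasDerivAt_gaugeFactor_mul (hasDerivAt_fourierMode θ k x))
    (fun x ↦ hasDerivAt_deriv_gaugeFactor_mul b (y₂ := fun x ↦ -(4 * (k : ℝ) ^ 2 * _))
      (hasDerivAt_fourierMode θ k x) (hasDerivAt_fourierModeDeriv θ k x))
    (by unfold hillPotential gaugedOperator fourierModeDeriv; fun_prop)
    ((periodic_gaugeFactor _).mul (periodic_fourierMode θ k))
    ((periodic_gaugeFactor _).mul
      ((hper_sin.mul (periodic_fourierMode θ k)).add (periodic_fourierModeDeriv θ k)))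
  have hintegrand (x : ℝ) :
      f x * (-(gaugeFactor (β * s) x * (hillPotential b β s x * fourierMode θ k x -
          gaugedOperator b β s x (fourierMode θ k x) (fourierModeDeriv θ k x)
            (-(4 * (k : ℝ) ^ 2 * fourierMode θ k x)))) +
        hillPotential b β s x * (gaugeFactor (β * s) x * fourierMode θ k x) -
        lam * (gaugeFactor (β * s) x * fourierMode θ k x)) =
      s * (gaugeFactor (β * s) x * f x *
          neighbourSum (recCoeff b β) (fun l ↦ fourierMode θ l x) k) -
        (lam + 2 * (β * s) ^ 2 - 4 * (k : ℝ) ^ 2) *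
          (gaugeFactor (β * s) x * f x * fourierMode θ k x) := by
    rw [gaugedOperator_fourierMode]
    ring
  simp only [hintegrand] at hgreen
  rw [intervalIntegral.integral_sub
      (Continuous.intervalIntegrable (by unfold neighbourSum; fun_prop) _ _)
      ((intervalIntegrable_mul_fourierMode hcont k).const_mul _),
    intervalIntegral.integral_const_mul, intervalIntegral.integral_const_mul,
    ← neighbourSum_modeCoeff _ hcont] at hgreen
  exact (sub_eq_zero.1 hgreen).symm

end ModeCoefficients

section Completeness

variable {θ σ : ℝ} {h : ℝ → ℝ}

lemma fourierCoeff_eq_modeCoeff [Fact (0 < π)] (hcont : Continuous h) {H : AddCircle π → ℂ}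
    (hH : ∀ x : ℝ, H x = h x) (n : ℤ) :
    fourierCoeff H n =
      (1 / π : ℝ) • ((modeCoeff 0 h n : ℂ) - Complex.I * modeCoeff (π / 2) h n) := by
  have hintegrand (x : ℝ) : fourier (-n) (x : AddCircle π) • H x =
      ((h x * fourierMode 0 n x : ℝ) : ℂ) -
        Complex.I * ((h x * fourierMode (π / 2) n x : ℝ) : ℂ) := by
    have hexponent : 2 * (π : ℂ) * Complex.I * ((-n : ℤ) : ℂ) * x / π =
        ((-(2 * n * x) : ℝ) : ℂ) * Complex.I := by
      have : (π : ℂ) ≠ 0 := by exact_mod_cast pi_ne_zero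
      push_cast
      field_simp
    rw [hH, fourier_coe_apply, hexponent, Complex.exp_mul_I, ← Complex.ofReal_cos,
      ← Complex.ofReal_sin]
    unfold fourierMode
    rw [cos_sub_pi_div_two, sub_zero, cos_neg, sin_neg, smul_eq_mul]
    push_cast
    ring
  have hintegrable (θ : ℝ) : IntervalIntegrable
      (fun x ↦ ((h x * fourierMode θ n x : ℝ) : ℂ)) MeasureTheory.volume 0 π :=
    Continuous.intervalIntegrable (by fun_prop) _ _
  rw [fourierCoeff_eq_intervalIntegral H n 0, zero_add]
  simp only [hintegrand]
  rw [intervalIntegral.integral_sub (hintegrable 0) ((hintegrable _).const_mul _),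
    intervalIntegral.integral_const_mul, intervalIntegral.integral_ofReal,
    intervalIntegral.integral_ofReal, modeCoeff, modeCoeff]

lemma eq_zero_of_modeCoeff_eq_zero (hcont : Continuous h) (hper : Function.Periodic h π)
    (hcos : ∀ k, modeCoeff 0 h k = 0) (hsin : ∀ k, modeCoeff (π / 2) h k = 0) : h = 0 := by
  have : Fact (0 < π) := ⟨pi_pos⟩
  have hper' : Function.Periodic (fun x ↦ (h x : ℂ)) π := fun x ↦ by simp only [hper x]
  let H : C(AddCircle π, ℂ) :=
    ⟨hper'.lift, continuous_coinduced_dom.2 (Complex.continuous_ofReal.comp hcont)⟩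
  have hcoeff : fourierCoeff H = 0 := funext fun n ↦ by
    rw [fourierCoeff_eq_modeCoeff hcont (fun _ ↦ rfl), hcos, hsin]
    simp
  funext x
  have hsum := has_pointwise_sum_fourier_series_of_summable (f := H)
    (by rw [hcoeff]; exact summable_zero) x
  simp only [hcoeff, Pi.zero_apply, zero_smul] at hsum
  exact Complex.ofReal_eq_zero.1 (hsum.unique hasSum_zero)

lemma intervalIntegral_comp_neg_of_periodic (hper : Function.Periodic h π) :
    ∫ x in (0 : ℝ)..π, h (-x) = ∫ x in (0 : ℝ)..π, h x := by
  rw [intervalIntegral.integral_comp_neg]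
  simpa using hper.intervalIntegral_add_eq (-π) 0

lemma IsParityPhase.modeCoeff_eq_zero_of_opposite (hθ : IsParityPhase θ σ)
    (hper : Function.Periodic h π) (hparity : ∀ x, h (-x) = -σ * h x) (k : ℤ) :
    modeCoeff θ h k = 0 := by
  have hflip := intervalIntegral_comp_neg_of_periodic (hper.mul (periodic_fourierMode θ k))
  have hodd (x : ℝ) : (h * fourierMode θ k) (-x) = -(h x * fourierMode θ k x) := by
    simp only [Pi.mul_apply]
    rw [hparity, hθ.fourierMode_apply_neg]
    linear_combination (-(h x * fourierMode θ k x)) * hθ.mul_self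
  simp only [hodd, intervalIntegral.integral_neg, Pi.mul_apply] at hflip
  unfold modeCoeff
  linarith

lemma IsParityPhase.eq_zero_of_modeCoeff_eq_zero (hθ : IsParityPhase θ σ)
    (hcont : Continuous h) (hper : Function.Periodic h π) (hparity : ∀ x, h (-x) = σ * h x)
    (hzero : ∀ k, modeCoeff θ h k = 0) : h = 0 := by
  rcases hθ with ⟨rfl, rfl⟩ | ⟨rfl, rfl⟩
  · exact _root_.eq_zero_of_modeCoeff_eq_zero hcont hper hzero
      (IsParityPhase.modeCoeff_eq_zero_of_opposite (Or.inr ⟨rfl, rfl⟩) hper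
        (by simpa only [neg_neg] using hparity))
  · exact _root_.eq_zero_of_modeCoeff_eq_zero hcont hper
      (IsParityPhase.modeCoeff_eq_zero_of_opposite (Or.inl ⟨rfl, rfl⟩) hper hparity) hzero

lemma integral_fourierMode (θ : ℝ) (n : ℤ) :
    ∫ x in (0 : ℝ)..π, fourierMode θ n x = if n = 0 then π * cos θ else 0 := by
  split_ifs with hn
  · simp [fourierMode, hn]
  · have : 4 * (n : ℝ) ^ 2 ≠ 0 := by positivity
    have hderiv (x : ℝ) :
        HasDerivAt (fun x ↦ -(fourierModeDeriv θ n x / (4 * (n : ℝ) ^ 2)))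
          (fourierMode θ n x) x :=
      ((hasDerivAt_fourierModeDeriv θ n x).div_const _).neg.congr_deriv (by field_simp)
    rw [intervalIntegral.integral_eq_sub_of_hasDerivAt (fun x _ ↦ hderiv x)
      ((continuous_fourierMode θ n).intervalIntegrable _ _),
      (periodic_fourierModeDeriv θ n).eq, sub_self]

lemma IsParityPhase.modeCoeff_fourierMode (hθ : IsParityPhase θ σ) (k j : ℤ) :
    modeCoeff θ (fourierMode θ k) j =
      π / 2 * ((if k = j then 1 else 0) + if k = -j then σ else 0) := by
  have hproduct (x : ℝ) : fourierMode θ k x * fourierMode θ j x =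
      1 / 2 * fourierMode 0 (k - j) x + 1 / 2 * fourierMode (2 * θ) (k + j) x := by
    have hsub : fourierMode 0 (k - j) x = cos (2 * k * x - θ - (2 * j * x - θ)) := by
      unfold fourierMode; push_cast; ring_nf
    have hadd : fourierMode (2 * θ) (k + j) x = cos (2 * k * x - θ + (2 * j * x - θ)) := by
      unfold fourierMode; push_cast; ring_nf
    rw [hsub, hadd, cos_add, cos_sub]
    unfold fourierMode
    ring
  have hintegrable (θ : ℝ) (n : ℤ) :
      IntervalIntegrable (fun x ↦ 1 / 2 * fourierMode θ n x) MeasureTheory.volume 0 π :=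
    Continuous.intervalIntegrable (by fun_prop) _ _
  simp only [modeCoeff, hproduct]
  rw [intervalIntegral.integral_add (hintegrable _ _) (hintegrable _ _),
    intervalIntegral.integral_const_mul, intervalIntegral.integral_const_mul,
    integral_fourierMode, integral_fourierMode, hθ.cos_two_mul, cos_zero]
  simp only [sub_eq_zero, add_eq_zero_iff_eq_neg]
  split_ifs <;> ring

end Completeness

section Synthesis

/-- The superposition of the functions `φ k` with coefficients `c`. -/
def modeSum (c : ℤ → ℝ) (φ : ℤ → ℝ → ℝ) (x : ℝ) : ℝ := ∑' k, c k * φ k x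

/-- Growth of order `p` of a family of functions, uniform in the variable. -/
def HasGrowth (p : ℕ) (φ : ℤ → ℝ → ℝ) : Prop :=
  ∃ D, 0 ≤ D ∧ ∀ k x, |φ k x| ≤ D * (1 + |(k : ℝ)|) ^ p

variable {p : ℕ} {c α α' : ℤ → ℝ} {φ φ' : ℤ → ℝ → ℝ} {b β s μ A θ σ : ℝ}

lemma HasGrowth.mono {q : ℕ} (hφ : HasGrowth p φ) (hpq : p ≤ q) : HasGrowth q φ := by
  obtain ⟨D, hD, hbound⟩ := hφ
  refine ⟨D, hD, fun k x ↦ (hbound k x).trans ?_⟩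
  gcongr
  linarith [abs_nonneg (k : ℝ)]

lemma HasGrowth.mul_linear (hφ : HasGrowth p φ) (hα : HasLinearGrowth α A) :
    HasGrowth (p + 1) fun k x ↦ α k * φ k x := by
  obtain ⟨D, hD, hbound⟩ := hφ
  have hA := hα.pos
  refine ⟨A * D, by positivity, fun k x ↦ ?_⟩
  rw [abs_mul]
  calc |α k| * |φ k x| ≤ A * (1 + |(k : ℝ)|) * (D * (1 + |(k : ℝ)|) ^ p) :=
        mul_le_mul (hα.abs_le k) (hbound k x) (abs_nonneg _) (by positivity)
    _ = A * D * (1 + |(k : ℝ)|) ^ (p + 1) := by ring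

lemma HasLinearGrowth.comp_neg (hα : HasLinearGrowth α A) :
    HasLinearGrowth (fun k ↦ α (-k)) A where
  pos := hα.pos
  abs_le k := by simpa using hα.abs_le (-k)

lemma hasGrowth_of_abs_le_one (hφ : ∀ k x, |φ k x| ≤ 1) : HasGrowth 0 φ :=
  ⟨1, zero_le_one, by simpa using hφ⟩

lemma hasLinearGrowth_two_mul_intCast : HasLinearGrowth (fun k ↦ 2 * k) 2 where
  pos := two_pos
  abs_le k := by
    rw [abs_mul, abs_two]
    linarith

lemma hasGrowth_fourierMode (θ : ℝ) : HasGrowth 0 (fourierMode θ) :=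
  hasGrowth_of_abs_le_one (abs_fourierMode_le_one θ)

lemma hasGrowth_fourierModeDeriv (θ : ℝ) : HasGrowth 1 (fourierModeDeriv θ) := by
  have hsin : HasGrowth 0 fun (k : ℤ) x ↦ -sin (2 * k * x - θ) :=
    hasGrowth_of_abs_le_one fun k x ↦ by
      rw [abs_neg]
      exact abs_sin_le_one _
  convert hsin.mul_linear hasLinearGrowth_two_mul_intCast using 3
  rw [fourierModeDeriv, mul_neg]

lemma hasGrowth_fourierModeDeriv₂ (θ : ℝ) :
    HasGrowth 2 fun (k : ℤ) x ↦ -(4 * (k : ℝ) ^ 2 * fourierMode θ k x) := by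
  have hneg : HasGrowth 0 fun (k : ℤ) x ↦ -fourierMode θ k x :=
    hasGrowth_of_abs_le_one fun k x ↦ by
      rw [abs_neg]
      exact abs_fourierMode_le_one θ k x
  convert (hneg.mul_linear hasLinearGrowth_two_mul_intCast).mul_linear
    hasLinearGrowth_two_mul_intCast using 3
  ring

lemma summable_one_div_one_add_abs_sq : Summable fun k : ℤ ↦ 1 / (1 + |(k : ℝ)|) ^ 2 := by
  have hnat : Summable fun n : ℕ ↦ 1 / (1 + (n : ℝ)) ^ 2 := by
    simpa only [add_comm] using summable_one_div_succ_sq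
  exact Summable.of_nat_of_neg (by simpa using hnat) (by simpa using hnat)

lemma HasDecay.exists_summable_bound (hc : HasDecay (p + 2) c) (hφ : HasGrowth p φ) :
    ∃ u : ℤ → ℝ, Summable u ∧ ∀ k x, |c k * φ k x| ≤ u k := by
  obtain ⟨C, hC, hdecay⟩ := hc
  obtain ⟨D, _, hgrowth⟩ := hφ
  refine ⟨_, summable_one_div_one_add_abs_sq.mul_left (C * D), fun k x ↦ ?_⟩
  rw [abs_mul]
  calc |c k| * |φ k x| ≤ C / (1 + |(k : ℝ)|) ^ (p + 2) * (D * (1 + |(k : ℝ)|) ^ p) :=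
        mul_le_mul (hdecay k) (hgrowth k x) (abs_nonneg _) (by positivity)
    _ = C * D * (1 / (1 + |(k : ℝ)|) ^ 2) := by
        rw [pow_add]
        field_simp

lemma HasDecay.hasSum_modeSum (hc : HasDecay (p + 2) c) (hφ : HasGrowth p φ) (x : ℝ) :
    HasSum (fun k ↦ c k * φ k x) (modeSum c φ x) := by
  obtain ⟨u, hu, hbound⟩ := hc.exists_summable_bound hφ
  exact (Summable.of_norm_bounded hu fun k ↦ hbound k x).hasSum

lemma HasDecay.hasDerivAt_modeSum (hc : HasDecay (p + 2) c) (hφ : HasGrowth p φ)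
    (hφ' : HasGrowth p φ') (hderiv : ∀ k x, HasDerivAt (φ k) (φ' k x) x) (x : ℝ) :
    HasDerivAt (modeSum c φ) (modeSum c φ' x) x := by
  obtain ⟨u, hu, hbound⟩ := hc.exists_summable_bound hφ'
  exact hasDerivAt_tsum hu (fun k y ↦ (hderiv k y).const_mul (c k)) hbound
    (hc.hasSum_modeSum hφ 0).summable x

lemma HasDecay.continuous_modeSum (hc : HasDecay (p + 2) c) (hφ : HasGrowth p φ)
    (hcont : ∀ k, Continuous (φ k)) : Continuous (modeSum c φ) := by
  obtain ⟨u, hu, hbound⟩ := hc.exists_summable_bound hφ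
  exact continuous_tsum (fun k ↦ (hcont k).const_mul (c k)) hu hbound

lemma periodic_modeSum_fourierMode (c : ℤ → ℝ) (θ : ℝ) :
    Function.Periodic (modeSum c (fourierMode θ)) π := fun x ↦ by
  simp only [modeSum, periodic_fourierMode θ _ x]

lemma IsParityPhase.modeSum_apply_neg (hθ : IsParityPhase θ σ) (c : ℤ → ℝ) (x : ℝ) :
    modeSum c (fourierMode θ) (-x) = σ * modeSum c (fourierMode θ) x := by
  simp only [modeSum, hθ.fourierMode_apply_neg, mul_left_comm _ σ, tsum_mul_left]

lemma HasDecay.modeCoeff_modeSum (hc : HasDecay (p + 2) c) (hθ : IsParityPhase θ σ)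
    (hsym : ∀ k, c (-k) = σ * c k) (j : ℤ) :
    modeCoeff θ (modeSum c (fourierMode θ)) j = π * c j := by
  have hgrowth := (hasGrowth_fourierMode θ).mono (Nat.zero_le p)
  obtain ⟨u, hu, hbound⟩ := hc.exists_summable_bound hgrowth
  have hterm (k : ℤ) : ∫ x in (0 : ℝ)..π, c k * fourierMode θ k x * fourierMode θ j x =
      (if k = j then π / 2 * c j else 0) + if k = -j then π / 2 * c j else 0 := by
    simp only [mul_assoc]
    rw [intervalIntegral.integral_const_mul, ← modeCoeff, hθ.modeCoeff_fourierMode]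
    simp only [mul_add, mul_ite, mul_one, mul_zero]
    congr 1
    · exact ite_congr rfl (fun hk ↦ by rw [hk, mul_comm]) fun _ ↦ rfl
    · refine ite_congr rfl (fun hk ↦ ?_) fun _ ↦ rfl
      rw [hk, hsym]
      linear_combination π / 2 * c j * hθ.mul_self
  have hsum : HasSum (fun k : ℤ ↦ ∫ x in (0 : ℝ)..π, c k * fourierMode θ k x * fourierMode θ j x)
      (modeCoeff θ (modeSum c (fourierMode θ)) j) := by
    refine intervalIntegral.hasSum_integral_of_dominated_convergence (fun k _ ↦ u k)
      (fun k ↦ Continuous.aestronglyMeasurable (by fun_prop)) (fun k ↦ .of_forall fun x _ ↦ ?_)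
      (.of_forall fun _ _ ↦ hu) intervalIntegrable_const
      (.of_forall fun x _ ↦ (hc.hasSum_modeSum hgrowth x).mul_right _)
    rw [norm_mul]
    exact (mul_le_of_le_one_right (norm_nonneg _) (abs_fourierMode_le_one θ j x)).trans (hbound k x)
  simp only [hterm] at hsum
  rw [hsum.unique ((hasSum_ite_eq j _).add (hasSum_ite_eq (-j) _))]
  ring

lemma exists_hasSum_mul_neighbourSum {ψ : ℤ → ℝ} (htranspose : ∀ k, α' k = α (1 - k))
    (hpred : Summable fun k ↦ c k * (α' k * ψ (k - 1)))
    (hsucc : Summable fun k ↦ c k * (α' (-k) * ψ (k + 1))) :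
    ∃ S, HasSum (fun k ↦ c k * neighbourSum α' ψ k) S ∧
      HasSum (fun k ↦ neighbourSum α c k * ψ k) S := by
  refine ⟨_, by simpa only [neighbourSum, mul_add] using hpred.hasSum.add hsucc.hasSum,
    (((Equiv.addRight 1).hasSum_iff.2 hpred.hasSum).add
      ((Equiv.subRight 1).hasSum_iff.2 hsucc.hasSum)).congr_fun fun k ↦ ?_⟩
  simp only [Function.comp_apply, Equiv.coe_addRight, Equiv.subRight_apply, neighbourSum,
    htranspose]
  ring_nf

lemma HasDecay.gaugedOperator_modeSum (hc : HasDecay 4 c)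
    (hrec : SolvesRecurrence (recCoeff b β) s μ c) (x : ℝ) :
    gaugedOperator b (-β) s x (modeSum c (fourierMode θ) x) (modeSum c (fourierModeDeriv θ) x)
        (modeSum c (fun k x ↦ -(4 * (k : ℝ) ^ 2 * fourierMode θ k x)) x) =
      (μ - 2 * (β * s) ^ 2) * modeSum c (fourierMode θ) x := by
  have hα := hasLinearGrowth_recCoeff b (-β)
  have hneighbour (i : ℤ) : HasGrowth 0 fun k ↦ fourierMode θ (k + i) :=
    hasGrowth_of_abs_le_one fun k ↦ abs_fourierMode_le_one θ (k + i)
  have h₀ := hc.hasSum_modeSum ((hasGrowth_fourierMode θ).mono (Nat.zero_le 2)) x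
  have h₁ := hc.hasSum_modeSum ((hasGrowth_fourierModeDeriv θ).mono one_le_two) x
  have h₂ := hc.hasSum_modeSum (hasGrowth_fourierModeDeriv₂ θ) x
  obtain ⟨S, hS, hS'⟩ := exists_hasSum_mul_neighbourSum (c := c)
    (ψ := fun k ↦ fourierMode θ k x) (recCoeff_neg b β)
    (hc.hasSum_modeSum (((hneighbour (-1)).mul_linear hα).mono one_le_two) x).summable
    (hc.hasSum_modeSum (((hneighbour 1).mul_linear hα.comp_neg).mono one_le_two) x).summable
  set y := modeSum c (fourierMode θ) x
  set y₁ := modeSum c (fourierModeDeriv θ) x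
  set y₂ := modeSum c (fun k x ↦ -(4 * (k : ℝ) ^ 2 * fourierMode θ k x)) x
  have hoperator :
      gaugedOperator b (-β) s x y y₁ y₂ = -y₂ - 2 * (β * s) ^ 2 * y + s * S := by
    refine ((h₂.neg.sub (h₁.mul_left _)).add (h₀.mul_left _)).unique
      (((h₂.neg.sub (h₀.mul_left _)).add (hS.mul_left s)).congr_fun fun k ↦ ?_)
    have hmode := gaugedOperator_fourierMode b (-β) s θ k x
    unfold gaugedOperator at hmode
    linear_combination c k * hmode
  rw [hoperator]
  refine ((h₂.neg.sub (h₀.mul_left _)).add (hS'.mul_left s)).unique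
    ((h₀.mul_left _).congr_fun fun k ↦ ?_)
  linear_combination -(fourierMode θ k x) * hrec k

lemma IsParityPhase.exists_isPerEF (hθ : IsParityPhase θ σ)
    (hrec : SolvesRecurrence (recCoeff b β) s μ c) (hsym : ∀ k, c (-k) = σ * c k)
    (hc : HasDecay 4 c) :
    ∃ f, IsPerEF (hillPotential b β s) (μ - 2 * (β * s) ^ 2) f ∧ (∀ x, f (-x) = σ * f x) ∧
      ∀ j, gaugedCoeff θ (β * s) f j = π * c j := by
  have hgrowth₀ := (hasGrowth_fourierMode θ).mono (Nat.zero_le 2)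
  have hgrowth₁ := (hasGrowth_fourierModeDeriv θ).mono one_le_two
  refine ⟨fun x ↦ gaugeFactor (-β * s) x * modeSum c (fourierMode θ) x, ?_, fun x ↦ ?_,
    fun j ↦ ?_⟩
  · rw [← hillPotential_neg]
    exact isPerEF_gaugeFactor_mul
      (hc.hasDerivAt_modeSum hgrowth₀ hgrowth₁ (hasDerivAt_fourierMode θ))
      (hc.hasDerivAt_modeSum hgrowth₁ (hasGrowth_fourierModeDeriv₂ θ)
        (hasDerivAt_fourierModeDeriv θ))
      (hc.continuous_modeSum (hasGrowth_fourierModeDeriv₂ θ) fun k ↦ by fun_prop)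
      (hc.gaugedOperator_modeSum hrec) (periodic_modeSum_fourierMode c θ)
  · simp only [gaugeFactor_apply_neg, hθ.modeSum_apply_neg, mul_left_comm]
  · have hcancel (x : ℝ) : gaugeFactor (β * s) x * (gaugeFactor (-β * s) x *
        modeSum c (fourierMode θ) x) = modeSum c (fourierMode θ) x := by
      rw [← mul_assoc, mul_comm (gaugeFactor _ x), neg_mul, gaugeFactor_neg_mul_gaugeFactor,
        one_mul]
    simp only [gaugedCoeff, hcancel]
    exact hc.modeCoeff_modeSum hθ hsym j

end Synthesis

section Eigenspaces

open Module

/-- The space of `π`-periodic solutions of `-f'' + v f = lam f`. -/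
def perEigenspace (v : ℝ → ℝ) (lam : ℝ) : Submodule ℝ (ℝ → ℝ) where
  carrier := {f | IsPerEF v lam f}
  zero_mem' := isPerEF_of_hasDerivAt (fun x ↦ hasDerivAt_const x 0) (fun x ↦ hasDerivAt_const x 0)
    continuous_const (by simp) (fun _ ↦ rfl)
  add_mem' hf hg := isPerEF_of_hasDerivAt (fun x ↦ (hf.hasDerivAt x).add (hg.hasDerivAt x))
    (fun x ↦ (hf.hasDerivAt_deriv x).add (hg.hasDerivAt_deriv x))
    (hf.continuous_deriv_deriv.add hg.continuous_deriv_deriv)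
    (fun x ↦ by simp only [Pi.add_apply]; linear_combination hf.2.1 x + hg.2.1 x)
    (Function.Periodic.add hf.2.2 hg.2.2)
  smul_mem' t _ hf := isPerEF_of_hasDerivAt (fun x ↦ (hf.hasDerivAt x).const_smul t)
    (fun x ↦ (hf.hasDerivAt_deriv x).const_smul t) (hf.continuous_deriv_deriv.const_smul t)
    (fun x ↦ by simp only [Pi.smul_apply, smul_eq_mul]; linear_combination t * hf.2.1 x)
    (Function.Periodic.smul hf.2.2 t)

/-- The functions of parity `σ`: even for `σ = 1`, odd for `σ = -1`. -/
def paritySubspace (σ : ℝ) : Submodule ℝ (ℝ → ℝ) where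
  carrier := {f | ∀ x, f (-x) = σ * f x}
  zero_mem' := by simp
  add_mem' hf hg x := by simp only [Pi.add_apply, hf x, hg x, mul_add]
  smul_mem' t f hf x := by simp only [Pi.smul_apply, smul_eq_mul, hf x, mul_left_comm]

/-- The `π`-periodic solutions of parity `σ`. -/
def parityEigenspace (v : ℝ → ℝ) (lam σ : ℝ) : Submodule ℝ (ℝ → ℝ) :=
  perEigenspace v lam ⊓ paritySubspace σ

variable {v f : ℝ → ℝ} {lam : ℝ}

lemma perMult_eq_finrank (v : ℝ → ℝ) (lam : ℝ) :
    perMult v lam = finrank ℝ (perEigenspace v lam) :=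
  congrArg (fun E : Submodule ℝ (ℝ → ℝ) ↦ finrank ℝ E) (perEigenspace v lam).span_eq

lemma IsPerEF.comp_neg (hv : ∀ x, v (-x) = v x) (hf : IsPerEF v lam f) :
    IsPerEF v lam fun x ↦ f (-x) := by
  refine isPerEF_of_hasDerivAt (y₂ := fun x ↦ deriv (deriv f) (-x))
    (fun x ↦ (hf.hasDerivAt (-x)).scomp x (hasDerivAt_neg x))
    (fun x ↦ (((hf.hasDerivAt_deriv (-x)).scomp x (hasDerivAt_neg x)).const_smul
      (-1 : ℝ)).congr_deriv (by simp)) (hf.continuous_deriv_deriv.comp continuous_neg)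
    (fun x ↦ by simpa only [hv] using hf.2.1 (-x)) fun x ↦ ?_
  rw [neg_add, ← sub_eq_add_neg]
  exact Function.Periodic.sub_eq hf.2.2 (-x)

lemma parityEigenspace_sup (hv : ∀ x, v (-x) = v x) (lam : ℝ) :
    parityEigenspace v lam 1 ⊔ parityEigenspace v lam (-1) = perEigenspace v lam := by
  refine le_antisymm (sup_le inf_le_left inf_le_left) fun f hf ↦ ?_
  have hneg : (fun x ↦ f (-x)) ∈ perEigenspace v lam := IsPerEF.comp_neg hv hf
  refine Submodule.mem_sup.2
    ⟨(1 / 2 : ℝ) • (f + fun x ↦ f (-x)), ⟨Submodule.smul_mem _ _ (add_mem hf hneg), fun x ↦ ?_⟩,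
      (1 / 2 : ℝ) • (f - fun x ↦ f (-x)), ⟨Submodule.smul_mem _ _ (sub_mem hf hneg), fun x ↦ ?_⟩,
      ?_⟩
  · simp only [Pi.smul_apply, Pi.add_apply, neg_neg, smul_eq_mul]; ring
  · simp only [Pi.smul_apply, Pi.sub_apply, neg_neg, smul_eq_mul]; ring
  · rw [← smul_add, add_add_sub_cancel, smul_add, ← add_smul, add_halves, one_smul]

lemma parityEigenspace_inf (v : ℝ → ℝ) (lam : ℝ) :
    parityEigenspace v lam 1 ⊓ parityEigenspace v lam (-1) = ⊥ := by
  refine (Submodule.eq_bot_iff _).2 fun f ⟨⟨_, heven⟩, ⟨_, hodd⟩⟩ ↦ funext fun x ↦ ?_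
  have := (heven x).symm.trans (hodd x)
  simp only [Pi.zero_apply]
  linarith

lemma perMult_eq_add (hv : ∀ x, v (-x) = v x) [FiniteDimensional ℝ (parityEigenspace v lam 1)]
    [FiniteDimensional ℝ (parityEigenspace v lam (-1))] :
    perMult v lam = finrank ℝ (parityEigenspace v lam 1) +
      finrank ℝ (parityEigenspace v lam (-1)) := by
  rw [← Submodule.finrank_sup_add_finrank_inf_eq, parityEigenspace_inf, finrank_bot, add_zero,
    parityEigenspace_sup hv, perMult_eq_finrank]

lemma perMult_pos (hv : ∀ x, v (-x) = v x) [FiniteDimensional ℝ (parityEigenspace v lam 1)]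
    [FiniteDimensional ℝ (parityEigenspace v lam (-1))] (hf : IsPerEF v lam f) (hf₀ : f ≠ 0) :
    0 < perMult v lam := by
  have : FiniteDimensional ℝ (perEigenspace v lam) := by
    rw [← parityEigenspace_sup hv]; infer_instance
  rw [perMult_eq_finrank]
  exact finrank_pos_iff_exists_ne_zero.2 ⟨⟨f, hf⟩, fun h ↦ hf₀ (congrArg Subtype.val h)⟩

end Eigenspaces

section ParityEigenspaces

open Module

variable {b β s lam μ θ σ A : ℝ} {f : ℝ → ℝ} {c : ℤ → ℝ} {j m : ℕ}

lemma exists_forall_abs_gaugedCoeff_le (θ r : ℝ) (hf : Continuous f) :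
    ∃ B, ∀ k, |gaugedCoeff θ r f k| ≤ B :=
  exists_forall_abs_modeCoeff_le θ ((continuous_gaugeFactor r).mul hf)

lemma gaugedCoeff_sub_smul {g : ℝ → ℝ} (θ r : ℝ) (hf : Continuous f) (hg : Continuous g) (t : ℝ)
    (k : ℤ) : gaugedCoeff θ r (f - t • g) k = gaugedCoeff θ r f k - t * gaugedCoeff θ r g k := by
  unfold gaugedCoeff
  rw [← modeCoeff_sub_smul (by fun_prop) (by fun_prop)]
  congr 1
  funext x
  simp only [Pi.sub_apply, Pi.smul_apply, smul_eq_mul]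
  ring

lemma IsParityPhase.eq_zero_of_gaugedCoeff_eq_zero {v : ℝ → ℝ} {r : ℝ} (hθ : IsParityPhase θ σ)
    (hf : f ∈ parityEigenspace v lam σ) (hzero : ∀ k, gaugedCoeff θ r f k = 0) : f = 0 := by
  obtain ⟨⟨hsmooth, -, hper⟩, hparity⟩ := hf
  have hgauged : (fun x ↦ gaugeFactor r x * f x) = 0 :=
    hθ.eq_zero_of_modeCoeff_eq_zero ((continuous_gaugeFactor r).mul hsmooth.continuous)
      ((periodic_gaugeFactor r).mul hper)
      (fun x ↦ by rw [gaugeFactor_apply_neg, hparity x, mul_left_comm]) hzero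
  exact funext fun x ↦ (mul_eq_zero.1 (congrFun hgauged x)).resolve_left (gaugeFactor_pos r x).ne'

lemma IsParityPhase.abs_eq_one (hθ : IsParityPhase θ σ) : |σ| = 1 := by
  rcases hθ with ⟨_, rfl⟩ | ⟨_, rfl⟩ <;> simp

lemma IsParityPhase.gaugedCoeff_ne_zero (hθ : IsParityPhase θ σ)
    (hα : HasLinearGrowth (recCoeff b β) A) (hs : 0 ≤ s) (hsmall : 8 * A * s * (1 + j) ≤ 1)
    (hf : f ∈ parityEigenspace (hillPotential b β s) lam σ) (hf₀ : f ≠ 0)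
    (hnear : |lam + 2 * (β * s) ^ 2 - 4 * (j : ℝ) ^ 2| ≤ 1) :
    gaugedCoeff θ (β * s) f j ≠ 0 := by
  refine fun hcenter ↦ hf₀ (hθ.eq_zero_of_gaugedCoeff_eq_zero (r := β * s) hf fun k ↦ ?_)
  have hle := (hf.1.solvesRecurrence_gaugedCoeff θ).abs_le_abs_center hα hs hsmall hnear
    hθ.abs_eq_one (hθ.modeCoeff_neg _)
    (exists_forall_abs_gaugedCoeff_le θ _ hf.1.1.continuous) k
  rw [hcenter, abs_zero] at hle
  exact abs_nonpos_iff.1 hle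

lemma IsParityPhase.isModeSolution_gaugedCoeff_div (hθ : IsParityPhase θ σ)
    (hα : HasLinearGrowth (recCoeff b β) A) (hs : 0 ≤ s) (hsmall : 8 * A * s * (1 + j) ≤ 1)
    (hf : f ∈ parityEigenspace (hillPotential b β s) lam σ) (hf₀ : f ≠ 0)
    (hnear : |lam + 2 * (β * s) ^ 2 - 4 * (j : ℝ) ^ 2| ≤ 1) :
    IsModeSolution (recCoeff b β) σ s j (lam + 2 * (β * s) ^ 2)
      (fun k ↦ gaugedCoeff θ (β * s) f k / gaugedCoeff θ (β * s) f j) where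
  near := hnear
  recurrence k := by
    have hrec := hf.1.solvesRecurrence_gaugedCoeff θ k
    unfold neighbourSum at hrec ⊢
    linear_combination hrec / gaugedCoeff θ (β * s) f j
  center := div_self (hθ.gaugedCoeff_ne_zero hα hs hsmall hf hf₀ hnear)
  symm k := by rw [gaugedCoeff, hθ.modeCoeff_neg, mul_div_assoc]
  abs_le_one k := by
    rw [abs_div]
    exact div_le_one_of_le₀ ((hf.1.solvesRecurrence_gaugedCoeff θ).abs_le_abs_center hα hs hsmall
      hnear hθ.abs_eq_one (hθ.modeCoeff_neg _)
      (exists_forall_abs_gaugedCoeff_le θ _ hf.1.1.continuous) k) (abs_nonneg _)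

lemma IsModeSolution.eq_one_of_zero {α : ℤ → ℝ} (hc : IsModeSolution α σ s 0 μ c) : σ = 1 := by
  have hsymm := hc.symm 0
  have hcenter : c 0 = 1 := hc.center
  rw [neg_zero, hcenter, mul_one] at hsymm
  exact hsymm.symm

lemma IsParityPhase.finrank_parityEigenspace_eq_one (hθ : IsParityPhase θ σ)
    (hα : HasLinearGrowth (recCoeff b β) A) (hs : 0 ≤ s) (hsmall : 8 * A * s * (1 + j) ≤ 1)
    (hc : IsModeSolution (recCoeff b β) σ s j (lam + 2 * (β * s) ^ 2) c) :
    finrank ℝ (parityEigenspace (hillPotential b β s) lam σ) = 1 := by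
  obtain ⟨g, hg, hparity, hcoeff⟩ := hθ.exists_isPerEF hc.recurrence hc.symm (hc.hasDecay hα hs 4)
  rw [add_sub_cancel_right] at hg
  have hcenter : gaugedCoeff θ (β * s) g j = π := by rw [hcoeff, hc.center, mul_one]
  refine (finrank_eq_one_iff_of_nonzero' ⟨g, hg, hparity⟩ fun h ↦ ?_).2 fun ⟨f, hf⟩ ↦ ?_
  · have hg₀ : g = 0 := congrArg Subtype.val h
    simp [gaugedCoeff, modeCoeff, hg₀, pi_ne_zero.symm] at hcenter
  · refine ⟨gaugedCoeff θ (β * s) f j / π, Subtype.ext (sub_eq_zero.1 ?_).symm⟩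
    by_contra hne
    refine hθ.gaugedCoeff_ne_zero hα hs hsmall
      (sub_mem hf (Submodule.smul_mem _ _ ⟨hg, hparity⟩)) hne hc.near ?_
    rw [gaugedCoeff_sub_smul θ _ hf.1.1.continuous hg.1.continuous, hcenter,
      div_mul_cancel₀ _ pi_ne_zero, sub_self]

lemma lt_of_near {x y : ℝ} {i : ℕ} (hij : i < j) (hx : |x - 4 * (i : ℝ) ^ 2| ≤ 1)
    (hy : |y - 4 * (j : ℝ) ^ 2| ≤ 1) : x < y := by
  have hgap : (i : ℝ) + 1 ≤ j := by exact_mod_cast hij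
  nlinarith [(abs_le.1 hx).2, (abs_le.1 hy).1, (i.cast_nonneg : (0 : ℝ) ≤ i)]

lemma injective_of_near {T : Finset ℕ} {M : ℕ → ℝ}
    (hM : ∀ j ∈ T, |M j - 4 * (j : ℝ) ^ 2| ≤ 1) :
    Function.Injective fun j : T ↦ M j := by
  rintro ⟨i, hi⟩ ⟨j, hj⟩ (hij : M i = M j)
  rcases lt_trichotomy i j with h | rfl | h
  · exact absurd hij (lt_of_near h (hM i hi) (hM j hj)).ne
  · rfl
  · exact absurd hij (lt_of_near h (hM j hj) (hM i hi)).ne'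

lemma IsParityPhase.parityEigenspace_eq_bot (hθ : IsParityPhase θ σ)
    (hα : HasLinearGrowth (recCoeff b β) A) (hs : 0 ≤ s) (hsmall : 8 * A * s * (1 + m) ≤ 1)
    (hlam : lam + 2 * (β * s) ^ 2 ≤ 4 * (m : ℝ) ^ 2 + 1)
    (hnot : ∀ j ≤ m, ∀ c, ¬ IsModeSolution (recCoeff b β) σ s j (lam + 2 * (β * s) ^ 2) c) :
    parityEigenspace (hillPotential b β s) lam σ = ⊥ := by
  refine (Submodule.eq_bot_iff _).2 fun f hf ↦ by_contra fun hf₀ ↦ ?_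
  have hfar (j : ℕ) (hj : j ≤ m) : 1 < |lam + 2 * (β * s) ^ 2 - 4 * (j : ℝ) ^ 2| := by
    by_contra! hnear
    exact hnot j hj _ (hθ.isModeSolution_gaugedCoeff_div hα hs (hα.small_of_le hs hj hsmall) hf hf₀
      hnear)
  exact hf₀ (hθ.eq_zero_of_gaugedCoeff_eq_zero (r := β * s) hf
    ((hf.1.solvesRecurrence_gaugedCoeff θ).eq_zero_off_windows hα hs hsmall hlam hfar
      (exists_forall_abs_gaugedCoeff_le θ _ hf.1.1.continuous)))

lemma IsParityPhase.finite_and_finrank_parityEigenspace (hθ : IsParityPhase θ σ)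
    (hα : HasLinearGrowth (recCoeff b β) A) (hs : 0 ≤ s) (hsmall : 8 * A * s * (1 + m) ≤ 1)
    (hlam : lam + 2 * (β * s) ^ 2 ≤ 4 * (m : ℝ) ^ 2 + 1) {T : Finset ℕ}
    (hT : ∀ j, j ∈ T ↔ j ≤ m ∧ (j = 0 → σ = 1)) {M : ℕ → ℝ} {c : ℕ → ℤ → ℝ}
    (hM : ∀ j ∈ T, IsModeSolution (recCoeff b β) σ s j (M j) (c j)) :
    FiniteDimensional ℝ (parityEigenspace (hillPotential b β s) lam σ) ∧
      finrank ℝ (parityEigenspace (hillPotential b β s) lam σ) =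
        Nat.card {j : T // M j - 2 * (β * s) ^ 2 = lam} := by
  by_cases hex : ∃ j : T, M j - 2 * (β * s) ^ 2 = lam
  · obtain ⟨j, rfl⟩ := hex
    have hjm := ((hT j).1 j.2).1
    have hone := hθ.finrank_parityEigenspace_eq_one (lam := M j - 2 * (β * s) ^ 2) hα hs
      (hα.small_of_le hs hjm hsmall) ((sub_add_cancel (M j) _).symm ▸ hM j j.2)
    refine ⟨Module.finite_of_finrank_pos (hone.symm ▸ one_pos), hone.trans ?_⟩
    have hinj := injective_of_near fun j hj ↦ (hM j hj).near
    simp only [sub_left_inj, hinj.eq_iff, Nat.card_unique]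
  · have hbot := hθ.parityEigenspace_eq_bot hα hs hsmall hlam fun j hj d hd ↦ ?_
    · have := Subtype.isEmpty_of_false (not_exists.1 hex)
      rw [hbot, finrank_bot, Nat.card_of_isEmpty]
      exact ⟨inferInstance, rfl⟩
    · have hjT : j ∈ T := (hT j).2 ⟨hj, fun h ↦ by subst h; exact hd.eq_one_of_zero⟩
      refine hex ⟨⟨j, hjT⟩, sub_eq_iff_eq_add.2 ?_⟩
      exact (hM j hjT).eigenvalue_unique hα hs (hα.small_of_le hs hj hsmall) hθ.abs_eq_one
        ((hT j).1 hjT).2 hd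

end ParityEigenspaces

section Counting

variable {ι J : Type*} {a : ι → ℝ} {L : J → ℝ}

lemma exists_equiv_fiber_of_card_eq [Finite J] {v : ℝ}
    (hcard : Nat.card {n // a n = v} = Nat.card {j // L j = v})
    (hex : ∀ n, a n = v → ∃ j, L j = v) : Nonempty ({j // L j = v} ≃ {n // a n = v}) := by
  have : Finite {n // a n = v} := by
    by_cases hJ : ∃ j, L j = v
    · have : Nonempty {j // L j = v} := nonempty_subtype.2 hJ
      exact Nat.finite_of_card_ne_zero (hcard ▸ Nat.card_pos.ne')
    · have := Subtype.isEmpty_of_false fun n hn ↦ hJ (hex n hn)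
      infer_instance
  exact Finite.card_eq.1 hcard.symm

lemma exists_injective_of_card_fiber_eq [Finite J] {Λ : ℝ} (hL : ∀ j, L j ≤ Λ)
    (hcard : ∀ v ≤ Λ, Nat.card {n // a n = v} = Nat.card {j // L j = v})
    (hex : ∀ n, a n ≤ Λ → ∃ j, L j = a n) :
    ∃ i : J → ι, Function.Injective i ∧ (∀ j, a (i j) = L j) ∧
      ∀ n, a n ≤ Λ → n ∈ Set.range i := by
  have hfiber (v : Set.Iic Λ) : Nonempty ({j // L j = v} ≃ {n // a n = v}) :=
    exists_equiv_fiber_of_card_eq (hcard v v.2) fun n hn ↦ hn ▸ hex n (hn.trans_le v.2)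
  let e (v : Set.Iic Λ) := (hfiber v).some
  let i (j : J) : ι := e ⟨L j, hL j⟩ ⟨j, rfl⟩
  have hi {v : ℝ} (hv : v ≤ Λ) {j : J} (hj : L j = v) : i j = e ⟨v, hv⟩ ⟨j, hj⟩ := by
    subst hj; rfl
  have hai (j : J) : a (i j) = L j := (e ⟨L j, hL j⟩ ⟨j, rfl⟩).2
  refine ⟨i, fun j k hjk ↦ ?_, hai, fun n hn ↦ ?_⟩
  · have hLjk : L j = L k := by rw [← hai, ← hai, hjk]
    rw [hi (hL k) hLjk, hi (hL k) rfl] at hjk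
    exact congrArg Subtype.val ((e _).injective (Subtype.ext hjk))
  · let x := (e ⟨a n, hn⟩).symm ⟨n, rfl⟩
    exact ⟨x, by rw [hi hn x.2, Subtype.coe_eta, Equiv.apply_symm_apply]⟩

lemma lt_natCard_of_isLowerSet_range [Finite J] {i : J → ℕ} (hi : Function.Injective i)
    (hlower : IsLowerSet (Set.range i)) (j : J) : i j < Nat.card J := by
  have hsub : Set.Iic (i j) ⊆ Set.range i := fun k hk ↦ hlower hk ⟨j, rfl⟩
  have hle := Set.ncard_le_ncard hsub (Set.finite_range i)
  rw [← Set.image_univ, Set.ncard_image_of_injective _ hi, Set.ncard_univ] at hle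
  simpa [Set.ncard_eq_toFinset_card'] using hle

lemma ncard_compl_pair_le [Finite J] {i : J → ℕ} (hi : Function.Injective i) {x y : J} {k : ℕ}
    (hlt : ∀ j, j ≠ x → j ≠ y → i j < k) : ({x, y}ᶜ : Set J).ncard ≤ k := by
  have hsub : i '' {x, y}ᶜ ⊆ Set.Iio k := by
    rintro _ ⟨j, hj, rfl⟩
    exact hlt j (fun h ↦ hj (Or.inl h)) fun h ↦ hj (Or.inr h)
  have hle := Set.ncard_le_ncard hsub (Set.finite_Iio k)
  rw [Set.ncard_image_of_injective _ hi] at hle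
  simpa [Set.ncard_eq_toFinset_card'] using hle

lemma sub_eq_abs_sub_of_card_fiber_eq [Finite J] {a : ℕ → ℝ} {Λ : ℝ} (ha : Monotone a)
    (hL : ∀ j, L j ≤ Λ)
    (hcard : ∀ v ≤ Λ, Nat.card {n // a n = v} = Nat.card {j // L j = v})
    (hex : ∀ n, a n ≤ Λ → ∃ j, L j = a n) {N : ℕ} (hJ : Nat.card J = N + 2) {x y : J}
    (hxy : x ≠ y) (htop : ∀ j, j ≠ x → j ≠ y → L j < L x ∧ L j < L y) :
    a (N + 1) - a N = |L x - L y| := by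
  obtain ⟨i, hi, hai, hrange⟩ := exists_injective_of_card_fiber_eq hL hcard hex
  have hlower : IsLowerSet (Set.range i) := by
    rintro _ k hk ⟨j, rfl⟩
    exact hrange k ((ha hk).trans ((hai j).trans_le (hL j)))
  have hlt {j k : J} (h : L j < L k) : i j < i k := ha.reflect_lt (by rwa [hai, hai])
  have hN : ({x, y}ᶜ : Set J).ncard = N := by
    have := Set.ncard_add_ncard_compl ({x, y} : Set J)
    rw [Set.ncard_pair hxy, hJ] at this
    omega
  have hNx := ncard_compl_pair_le hi fun j hjx hjy ↦ hlt (htop j hjx hjy).1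
  have hNy := ncard_compl_pair_le hi fun j hjx hjy ↦ hlt (htop j hjx hjy).2
  have hxN := lt_natCard_of_isLowerSet_range hi hlower x
  have hyN := lt_natCard_of_isLowerSet_range hi hlower y
  have hne : i x ≠ i y := hi.ne hxy
  have hmono : a N ≤ a (N + 1) := ha N.le_succ
  rw [← hai, ← hai]
  rcases lt_or_gt_of_ne hne with h | h
  · rw [show i x = N by omega, show i y = N + 1 by omega, abs_sub_comm,
      abs_of_nonneg (sub_nonneg.2 hmono)]
  · rw [show i x = N + 1 by omega, show i y = N by omega, abs_of_nonneg (sub_nonneg.2 hmono)]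

end Counting

section Gap

/-- The values `μ j`, `j ≤ m`, and `ν j`, `1 ≤ j ≤ m`, of the even and of the odd sector, shifted
back by `2 * r ^ 2` to eigenvalues of the Hill operator; here `r = β * s`. -/
def sectorEigenvalues (m : ℕ) (r : ℝ) (μ ν : ℕ → ℝ) : Finset.Iic m ⊕ Finset.Icc 1 m → ℝ :=
  Sum.elim (fun j ↦ μ j - 2 * r ^ 2) (fun j ↦ ν j - 2 * r ^ 2)

variable {b β s lam A : ℝ} {m : ℕ} {μ ν : ℕ → ℝ} {c d : ℕ → ℤ → ℝ}

lemma sectorEigenvalues_le (r : ℝ) (hμ : ∀ j ∈ Finset.Iic m, |μ j - 4 * (j : ℝ) ^ 2| ≤ 1)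
    (hν : ∀ j ∈ Finset.Icc 1 m, |ν j - 4 * (j : ℝ) ^ 2| ≤ 1) (j : Finset.Iic m ⊕ Finset.Icc 1 m) :
    sectorEigenvalues m r μ ν j ≤ 4 * (m : ℝ) ^ 2 + 1 - 2 * r ^ 2 := by
  have hle {x : ℝ} {j : ℕ} (hx : |x - 4 * (j : ℝ) ^ 2| ≤ 1) (hjm : j ≤ m) :
      x - 2 * r ^ 2 ≤ 4 * (m : ℝ) ^ 2 + 1 - 2 * r ^ 2 := by
    have : (j : ℝ) ^ 2 ≤ (m : ℝ) ^ 2 := by gcongr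
    linarith [(abs_le.1 hx).2]
  rcases j with ⟨j, hj⟩ | ⟨j, hj⟩
  · exact hle (hμ j hj) (Finset.mem_Iic.1 hj)
  · exact hle (hν j hj) (Finset.mem_Icc.1 hj).2

lemma sectorEigenvalues_lt (r : ℝ) (hμ : ∀ j ∈ Finset.Iic m, |μ j - 4 * (j : ℝ) ^ 2| ≤ 1)
    (hν : ∀ j ∈ Finset.Icc 1 m, |ν j - 4 * (j : ℝ) ^ 2| ≤ 1) {z : ℝ}
    (hz : |z - 4 * (m : ℝ) ^ 2| ≤ 1) {j : Finset.Iic m ⊕ Finset.Icc 1 m}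
    (hleft : ∀ hm, j ≠ Sum.inl ⟨m, hm⟩) (hright : ∀ hm, j ≠ Sum.inr ⟨m, hm⟩) :
    sectorEigenvalues m r μ ν j < z - 2 * r ^ 2 := by
  rcases j with ⟨j, hj⟩ | ⟨j, hj⟩
  · have hjm : j ≠ m := by rintro rfl; exact hleft hj rfl
    exact sub_lt_sub_right (lt_of_near ((Finset.mem_Iic.1 hj).lt_of_ne hjm) (hμ j hj) hz) _
  · have hjm : j ≠ m := by rintro rfl; exact hright hj rfl
    exact sub_lt_sub_right (lt_of_near ((Finset.mem_Icc.1 hj).2.lt_of_ne hjm) (hν j hj) hz) _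

lemma finite_and_perMult_hillPotential (hα : HasLinearGrowth (recCoeff b β) A)
    (hα' : HasLinearGrowth (recCoeff b (-β)) A) (hs : 0 ≤ s) (hsmall : 8 * A * s * (1 + m) ≤ 1)
    (hc : ∀ j ∈ Finset.Iic m, IsModeSolution (recCoeff b β) 1 s j (μ j) (c j))
    (hd : ∀ j ∈ Finset.Icc 1 m, IsModeSolution (recCoeff b (-β)) (-1) s j (ν j) (d j))
    (hlam : lam + 2 * (β * s) ^ 2 ≤ 4 * (m : ℝ) ^ 2 + 1) :
    FiniteDimensional ℝ (parityEigenspace (hillPotential b β s) lam 1) ∧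
      FiniteDimensional ℝ (parityEigenspace (hillPotential b β s) lam (-1)) ∧
        perMult (hillPotential b β s) lam =
          Nat.card {j // sectorEigenvalues m (β * s) μ ν j = lam} := by
  have hsq : (-β * s) ^ 2 = (β * s) ^ 2 := by ring
  obtain ⟨_, heven⟩ := IsParityPhase.finite_and_finrank_parityEigenspace (Or.inl ⟨rfl, rfl⟩)
    hα hs hsmall hlam (by simp) hc
  obtain ⟨hfin, hodd⟩ := IsParityPhase.finite_and_finrank_parityEigenspace (Or.inr ⟨rfl, rfl⟩)
    hα' hs hsmall (hsq.symm ▸ hlam) (by simp [and_comm, Nat.one_le_iff_ne_zero]; norm_num) hd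
  rw [hillPotential_neg] at hfin hodd
  refine ⟨inferInstance, hfin, ?_⟩
  rw [perMult_eq_add (hillPotential_apply_neg b β s), heven, hodd, hsq, ← Nat.card_sum]
  exact (Nat.card_congr (Equiv.subtypeSum
    (p := fun j ↦ sectorEigenvalues m (β * s) μ ν j = lam))).symm

lemma IsPerEF.exists_sectorEigenvalues_eq {f : ℝ → ℝ}
    (hf : IsPerEF (hillPotential b β s) lam f) (hf₀ : f ≠ 0)
    (hα : HasLinearGrowth (recCoeff b β) A) (hα' : HasLinearGrowth (recCoeff b (-β)) A)
    (hs : 0 ≤ s) (hsmall : 8 * A * s * (1 + m) ≤ 1)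
    (hc : ∀ j ∈ Finset.Iic m, IsModeSolution (recCoeff b β) 1 s j (μ j) (c j))
    (hd : ∀ j ∈ Finset.Icc 1 m, IsModeSolution (recCoeff b (-β)) (-1) s j (ν j) (d j))
    (hlam : lam + 2 * (β * s) ^ 2 ≤ 4 * (m : ℝ) ^ 2 + 1) :
    ∃ j, sectorEigenvalues m (β * s) μ ν j = lam := by
  obtain ⟨_, _, hmult⟩ := finite_and_perMult_hillPotential hα hα' hs hsmall hc hd hlam
  have hpos := perMult_pos (hillPotential_apply_neg b β s) hf hf₀
  rw [hmult] at hpos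
  exact nonempty_subtype.1 (Nat.card_pos_iff.1 hpos).1

lemma EnumPer.sub_eq_abs_sub (hα : HasLinearGrowth (recCoeff b β) A)
    (hα' : HasLinearGrowth (recCoeff b (-β)) A) (hs : 0 ≤ s) (hm : 1 ≤ m)
    (hsmall : 8 * A * s * (1 + m) ≤ 1)
    (hc : ∀ j ∈ Finset.Iic m, IsModeSolution (recCoeff b β) 1 s j (μ j) (c j))
    (hd : ∀ j ∈ Finset.Icc 1 m, IsModeSolution (recCoeff b (-β)) (-1) s j (ν j) (d j))
    {a : ℕ → ℝ} (ha : EnumPer (hillPotential b β s) a) :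
    a (2 * m) - a (2 * m - 1) = |μ m - ν m| := by
  obtain ⟨hmono, heigen, hcard⟩ := ha
  have hmult {lam : ℝ} (hlam : lam ≤ 4 * (m : ℝ) ^ 2 + 1 - 2 * (β * s) ^ 2) :=
    finite_and_perMult_hillPotential hα hα' hs hsmall hc hd (le_sub_iff_add_le.1 hlam)
  have hex (n : ℕ) (hn : a n ≤ 4 * (m : ℝ) ^ 2 + 1 - 2 * (β * s) ^ 2) :
      ∃ j, sectorEigenvalues m (β * s) μ ν j = a n := by
    obtain ⟨f, hf₀, hf⟩ := heigen n
    exact hf.exists_sectorEigenvalues_eq hf₀ hα hα' hs hsmall hc hd (le_sub_iff_add_le.1 hn)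
  have hmIic : m ∈ Finset.Iic m := Finset.mem_Iic.2 le_rfl
  have hmIcc : m ∈ Finset.Icc 1 m := Finset.mem_Icc.2 ⟨hm, le_rfl⟩
  have hμ (j) (hj : j ∈ Finset.Iic m) := (hc j hj).near
  have hν (j) (hj : j ∈ Finset.Icc 1 m) := (hd j hj).near
  have hgap := sub_eq_abs_sub_of_card_fiber_eq hmono (N := 2 * m - 1)
    (sectorEigenvalues_le (β * s) hμ hν) (fun lam hlam ↦ (hcard lam).trans (hmult hlam).2.2) hex
    (by simp only [Nat.card_sum, Nat.card_eq_finsetCard, Nat.card_Iic, Nat.card_Icc]; omega)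
    (x := Sum.inl ⟨m, hmIic⟩) (y := Sum.inr ⟨m, hmIcc⟩) Sum.inl_ne_inr fun j hjx hjy ↦
      ⟨sectorEigenvalues_lt (β * s) hμ hν (hμ m hmIic) (fun _ ↦ hjx) (fun _ ↦ hjy),
        sectorEigenvalues_lt (β * s) hμ hν (hν m hmIcc) (fun _ ↦ hjx) fun _ ↦ hjy⟩
  rw [show 2 * m - 1 + 1 = 2 * m by omega] at hgap
  exact hgap.trans (congrArg _ (sub_sub_sub_cancel_right _ _ _))

end Gap

section GapAsymptotics

variable {b c β : ℝ} {m : ℕ}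

lemma eventually_mul_le_one {A : ℝ} (t : ℝ) (hA : 0 < A) (ht : 0 < t) :
    ∀ᶠ s in 𝓝[>] (0 : ℝ), 0 < s ∧ 8 * A * s * t ≤ 1 := by
  filter_upwards [Ioo_mem_nhdsGT (show 0 < 1 / (8 * A * t) by positivity)] with s hs
  have hlt := (lt_div_iff₀ (by positivity)).1 hs.2
  exact ⟨hs.1, by linarith⟩

lemma exists_gap_eq_abs_isBigO (b β : ℝ) (hm : 1 ≤ m) :
    ∃ D : ℝ → ℝ,
      (∀ᶠ s in 𝓝[>] (0 : ℝ), ∀ a, EnumPer (hillPotential b β s) a →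
        a (2 * m) - a (2 * m - 1) = |D s|) ∧
      (fun s ↦ D s - 8 * (∏ k ∈ Finset.Icc 1 m, (recCoeff b β k * recCoeff b β (1 - k))) /
        (2 ^ (4 * m) * ((2 * m - 1).factorial : ℝ) ^ 2) * s ^ (2 * m)) =O[𝓝[>] 0]
          fun s ↦ s ^ (2 * m + 2) := by
  have hα := hasLinearGrowth_recCoeff b β
  have hα' : HasLinearGrowth (recCoeff b (-β)) (|b| + 4 * |β| + 1) := by
    simpa only [abs_neg] using hasLinearGrowth_recCoeff b (-β)
  obtain ⟨μ, c, hc⟩ := exists_modeSolutions (σ := 1) hα (by norm_num)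
  obtain ⟨ν, d, hd⟩ := exists_modeSolutions (σ := -1) hα' (by norm_num)
  have hsmall := eventually_mul_le_one (1 + (m : ℝ)) hα.pos (by positivity)
  refine ⟨fun s ↦ μ s m - ν s m, ?_, ?_⟩
  · filter_upwards [hsmall] with s ⟨hs, hsm⟩ a ha
    refine ha.sub_eq_abs_sub hα hα' hs.le hm hsm (c := c s) (d := d s)
      (fun j hj ↦ hc s j hs.le ?_ fun _ ↦ rfl) (fun j hj ↦ hd s j hs.le ?_ fun hj₀ ↦ ?_)
    · exact hα.small_of_le hs.le (Finset.mem_Iic.1 hj) hsm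
    · exact hα.small_of_le hs.le (Finset.mem_Icc.1 hj).2 hsm
    · exact absurd (Finset.mem_Icc.1 hj).1 (by omega)
  · have hO := isBigO_sub_modeEigenvalues hα hα' (recCoeff_neg b β) hm
      (hsmall.mono fun s hs ↦ hc s m hs.1.le hs.2 fun _ ↦ rfl)
      (hsmall.mono fun s hs ↦ hd s m hs.1.le hs.2 fun hm₀ ↦ absurd hm₀ (by omega))
    rwa [leadingConstant_eq (recCoeff_neg b β) hm] at hO

theorem exists_eventually_abs_gap_sub_le (b β : ℝ) (hm : 1 ≤ m) :
    ∃ C > 0, ∀ᶠ s in 𝓝[>] (0 : ℝ), ∀ a, EnumPer (hillPotential b β s) a →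
      |a (2 * m) - a (2 * m - 1) -
          8 * |∏ k ∈ Finset.Icc 1 m, (recCoeff b β k * recCoeff b β (1 - k))| * s ^ (2 * m) /
            (2 ^ (4 * m) * ((2 * m - 1).factorial : ℝ) ^ 2)| ≤ C * s ^ (2 * m + 2) := by
  obtain ⟨D, hgap, hO⟩ := exists_gap_eq_abs_isBigO b β hm
  obtain ⟨C, hC, hbound⟩ := hO.exists_pos
  refine ⟨C, hC, ?_⟩
  filter_upwards [hgap, hbound.bound, self_mem_nhdsWithin] with s hs hle (hs₀ : 0 < s) a ha
  rw [norm_eq_abs, norm_eq_abs, abs_of_pos (pow_pos hs₀ _)] at hle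
  rw [hs a ha]
  refine le_of_eq_of_le ?_ ((abs_abs_sub_abs_le _ _).trans hle)
  rw [abs_mul, abs_div, abs_mul, abs_of_pos (pow_pos hs₀ _), Nat.abs_ofNat,
    abs_of_pos (by positivity : (0 : ℝ) < 2 ^ (4 * m) * ((2 * m - 1).factorial : ℝ) ^ 2),
    div_mul_eq_mul_div]

lemma hillPotential_of_sq_eq (hβ : β ^ 2 = -c / 2) (s : ℝ) :
    hillPotential b β s = fun x ↦ b * s * cos (2 * x) + c * s ^ 2 * cos (4 * x) := by
  funext x
  unfold hillPotential
  linear_combination -2 * s ^ 2 * cos (4 * x) * hβ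

lemma recCoeff_mul_one_sub (hβ : β ^ 2 = -c / 2) (k : ℕ) :
    recCoeff b β k * recCoeff b β (1 - k) = (b / 2) ^ 2 + 8 * c * ((k : ℝ) - 1 / 2) ^ 2 := by
  unfold recCoeff
  push_cast
  linear_combination -16 * ((k : ℝ) - 1 / 2) ^ 2 * hβ

lemma tendsto_rpow_nhdsGT_zero {p : ℝ} (hp : 0 < p) :
    Tendsto (fun q : ℝ ↦ q ^ p) (𝓝[>] 0) (𝓝[>] 0) := by
  refine tendsto_nhdsWithin_iff.2 ⟨?_, ?_⟩
  · simpa only [zero_rpow hp.ne'] using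
      (continuousAt_rpow_const 0 p (.inr hp.le)).tendsto.mono_left nhdsWithin_le_nhds
  · filter_upwards [self_mem_nhdsWithin] with q hq using rpow_pos_of_pos hq p

theorem stmt6_general (b c m1 : ℝ) (hc : c ≤ 0) (hm1 : 0 < m1) (m : ℕ) (hm : 1 ≤ m)
    (lamP : ℝ → ℕ → ℝ)
    (hP : ∀ q : ℝ, 0 < q →
      EnumPer (fun x ↦ b * q ^ m1 * cos (2 * x) + c * q ^ (2 * m1) * cos (4 * x)) (lamP q)) :
    ∃ C > 0, ∃ δ > 0, ∀ q : ℝ, 0 < q → q < δ →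
      |lamP q (2 * m) - lamP q (2 * m - 1) -
          8 * |∏ k ∈ Finset.Icc 1 m, ((b / 2) ^ 2 + 8 * c * ((k : ℝ) - 1 / 2) ^ 2)| *
            q ^ (2 * m1 * (m : ℝ)) / (2 ^ (4 * m) * ((2 * m - 1).factorial : ℝ) ^ 2)| ≤
        C * q ^ (2 * m1 * ((m : ℝ) + 1)) := by
  have hβ : √(-c / 2) ^ 2 = -c / 2 := sq_sqrt (by linarith)
  obtain ⟨C, hC, hgap⟩ := exists_eventually_abs_gap_sub_le b √(-c / 2) hm
  obtain ⟨δ, hδ, hsub⟩ := mem_nhdsGT_iff_exists_Ioo_subset.1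
    ((tendsto_rpow_nhdsGT_zero hm1).eventually hgap)
  refine ⟨C, hC, δ, hδ, fun q hq hqδ ↦ ?_⟩
  have hpow {e : ℝ} {n : ℕ} (he : e = m1 * n) : q ^ e = (q ^ m1) ^ n := by
    rw [he, rpow_mul_natCast hq.le]
  have hbound := hsub ⟨hq, hqδ⟩ (lamP q) <| by
    rw [hillPotential_of_sq_eq hβ, ← hpow (by push_cast; ring : 2 * m1 = m1 * (2 : ℕ))]
    exact hP q hq
  simp only [recCoeff_mul_one_sub hβ] at hbound
  rwa [hpow (by push_cast; ring : 2 * m1 * (m : ℝ) = m1 * (2 * m : ℕ)),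
    hpow (by push_cast; ring : 2 * m1 * ((m : ℝ) + 1) = m1 * (2 * m + 2 : ℕ))]

end GapAsymptotics

theorem stmt6 (b c m1 : ℝ) (hc : c < 0) (hm1 : 0 < m1)
    (m : ℕ) (hm : 2 ≤ m) (lamP lamM : ℝ → ℕ → ℝ)
    (hP : ∀ q : ℝ, 0 < q →
      EnumPer (fun x => b * q ^ m1 * Real.cos (2 * x) + c * q ^ (2 * m1) * Real.cos (4 * x))
        (lamP q))
    (hM : ∀ q : ℝ, 0 < q →
      EnumSemi (fun x => b * q ^ m1 * Real.cos (2 * x) + c * q ^ (2 * m1) * Real.cos (4 * x))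
        (lamM q)) :
    ∃ C > 0, ∃ δ > 0, ∀ q : ℝ, 0 < q → q < δ →
      |gapLen (lamP q) (lamM q) (2 * m) -
          8 * |∏ k ∈ Finset.Icc 1 m, ((b / 2) ^ 2 + 8 * c * ((k : ℝ) - 1 / 2) ^ 2)| *
            q ^ (2 * m1 * (m : ℝ)) / (2 ^ (4 * m) * (((2 * m - 1).factorial : ℝ)) ^ 2)| ≤
        C * q ^ (2 * m1 * ((m : ℝ) + 1)) := by
  simpa only [gapLen, if_neg (Nat.not_odd_iff_even.2 (even_two_mul m))] using
    stmt6_general b c m1 hc.le hm1 m (by omega) lamP hP
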